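/- Every maximal almost rigid representation of Q contains each of the representations H(α) and C(α), for every arrow α of Q, as a direct summand. -/

import Mathlib

open scoped Classical

noncomputable section

namespace CambrianA

/-! ### Combinatorics of a type `A_{n+2}` quiver.

Vertices are `1, …, n+2`.  For `1 ≤ i ≤ n+1`, `ε i = true` means that the arrow between
`i` and `i+1` is oriented `i → i+1` (`i` is *upper-barred*), and `ε i = false` means it is
oriented `(i+1) → i` (`i` is *lower-barred*). -/

/-- `MaxIncr n ε i j` : the path `i → i+1 → ⋯ → j` is a maximal increasing path of `Q`. -/
def MaxIncr (n : ℕ) (ε : ℕ → Bool) (i j : ℕ) : Prop :=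
  1 ≤ i ∧ i ≤ j ∧ j ≤ n + 2 ∧ (∀ ℓ, i ≤ ℓ → ℓ < j → ε ℓ = true) ∧
    (i = 1 ∨ ε (i - 1) = false) ∧ (j = n + 2 ∨ ε j = false)

/-- `MaxDecr n ε i j` : the path `i → i-1 → ⋯ → j` is a maximal decreasing path of `Q`. -/
def MaxDecr (n : ℕ) (ε : ℕ → Bool) (i j : ℕ) : Prop :=
  1 ≤ j ∧ j ≤ i ∧ i ≤ n + 2 ∧ (∀ ℓ, j ≤ ℓ → ℓ < i → ε ℓ = false) ∧
    (i = n + 2 ∨ ε i = true) ∧ (j = 1 ∨ ε (j - 1) = true)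

/-- Vertices of the polygon lying on the lower boundary: `0`, `n+2` and lower-barred ones. -/
def LowerVertex (n : ℕ) (ε : ℕ → Bool) (x : ℕ) : Prop :=
  x = 0 ∨ x = n + 2 ∨ (1 ≤ x ∧ x ≤ n + 1 ∧ ε x = false)

/-- Vertices of the polygon lying on the upper boundary: `0`, `n+2` and upper-barred ones. -/
def UpperVertex (n : ℕ) (ε : ℕ → Bool) (x : ℕ) : Prop :=
  x = 0 ∨ x = n + 2 ∨ (1 ≤ x ∧ x ≤ n + 1 ∧ ε x = true)

/-- `(a,b)` is a lower boundary edge: `a < b` are consecutive lower vertices. -/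
def LowerEdge (n : ℕ) (ε : ℕ → Bool) (a b : ℕ) : Prop :=
  LowerVertex n ε a ∧ LowerVertex n ε b ∧ a < b ∧
    ∀ c, LowerVertex n ε c → ¬(a < c ∧ c < b)

/-- `(a,b)` is an upper boundary edge: `a < b` are consecutive upper vertices. -/
def UpperEdge (n : ℕ) (ε : ℕ → Bool) (a b : ℕ) : Prop :=
  UpperVertex n ε a ∧ UpperVertex n ε b ∧ a < b ∧
    ∀ c, UpperVertex n ε c → ¬(a < c ∧ c < b)

def BoundaryEdge (n : ℕ) (ε : ℕ → Bool) (a b : ℕ) : Prop :=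
  LowerEdge n ε a b ∨ UpperEdge n ε a b

/-- `IsHook n ε a lo hi` : the hook of the arrow of `Q` between `a` and `a+1` is the
maximal path supported on the interval `[lo, hi]`.
If `ε a = true` (arrow `a → a+1`, source `a`), the hook is the maximal decreasing path
starting at `a`; if `ε a = false` (arrow `a+1 → a`, source `a+1`), the hook is the
maximal increasing path starting at `a+1`. -/
def IsHook (n : ℕ) (ε : ℕ → Bool) (a lo hi : ℕ) : Prop :=
  if ε a = true then
    hi = a ∧ 1 ≤ lo ∧ lo ≤ a ∧ (∀ ℓ, lo ≤ ℓ → ℓ < a → ε ℓ = false) ∧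
      (lo = 1 ∨ ε (lo - 1) = true)
  else
    lo = a + 1 ∧ a + 1 ≤ hi ∧ hi ≤ n + 2 ∧ (∀ ℓ, a + 1 ≤ ℓ → ℓ < hi → ε ℓ = true) ∧
      (hi = n + 2 ∨ ε hi = false)

/-- `IsCohook n ε a lo hi` : the cohook of the arrow of `Q` between `a` and `a+1` is the
maximal path supported on the interval `[lo, hi]`, ending at the target of the arrow. -/
def IsCohook (n : ℕ) (ε : ℕ → Bool) (a lo hi : ℕ) : Prop :=
  if ε a = true then
    lo = a + 1 ∧ a + 1 ≤ hi ∧ hi ≤ n + 2 ∧ (∀ ℓ, a + 1 ≤ ℓ → ℓ < hi → ε ℓ = false) ∧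
      (hi = n + 2 ∨ ε hi = true)
  else
    hi = a ∧ 1 ≤ lo ∧ lo ≤ a ∧ (∀ ℓ, lo ≤ ℓ → ℓ < a → ε ℓ = true) ∧
      (lo = 1 ∨ ε (lo - 1) = false)

/-- Counterclockwise neighbor `R⁻¹(ℓ)` of the vertex `ℓ` of the polygon `P(Q)`, for the
cyclic order `0`, lower-barred vertices increasing, `n+2`, upper-barred vertices
decreasing. -/
def Rinv (n : ℕ) (ε : ℕ → Bool) (ℓ : ℕ) : ℕ :=
  if ℓ = n + 2 then sSup ({0} ∪ {x | 1 ≤ x ∧ x ≤ n + 1 ∧ ε x = true})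
  else if 1 ≤ ℓ ∧ ℓ ≤ n + 1 ∧ ε ℓ = true then
    sSup ({0} ∪ {x | 1 ≤ x ∧ x < ℓ ∧ ε x = true})
  else
    sInf ({n + 2} ∪ {x | ℓ < x ∧ x ≤ n + 1 ∧ ε x = false})

/-- `γ(i′,j′)` is a pivot of `γ(i,j)`. -/
def IsPivot (n : ℕ) (ε : ℕ → Bool) (i j i' j' : ℕ) : Prop :=
  (i' = Rinv n ε i ∧ j' = j ∧ Rinv n ε i < j) ∨
    (i' = i ∧ j' = Rinv n ε j ∧ i < Rinv n ε j)

/-! ### Geometry of the polygon `P(Q)`.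

The plane is identified with `ℂ`; `p x` is the vertex of the polygon labeled `x`,
for `0 ≤ x ≤ n+2`. -/

/-- The hypotheses on the points `p 0, …, p (n+2)` realizing the polygon `P(Q)`:
strictly increasing `x`-coordinates; `p 0` and `p (n+2)` on a common horizontal line `L`;
upper-barred vertices above `L`, lower-barred vertices below `L`; convex position. -/
def PolyPts (n : ℕ) (ε : ℕ → Bool) (p : ℕ → ℂ) : Prop :=
  (∀ a b, a < b → b ≤ n + 2 → (p a).re < (p b).re) ∧
    (p (n + 2)).im = (p 0).im ∧
    (∀ i, 1 ≤ i → i ≤ n + 1 →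
      (ε i = true → (p 0).im < (p i).im) ∧ (ε i = false → (p i).im < (p 0).im)) ∧
    ∀ i, i ≤ n + 2 → p i ∉ convexHull ℝ (p '' {j | j ≤ n + 2 ∧ j ≠ i})

/-- The line segment `γ(e.1, e.2)` of the polygon. -/
def Seg (p : ℕ → ℂ) (e : ℕ × ℕ) : Set ℂ := segment ℝ (p e.1) (p e.2)

/-- Two segments cross when they intersect in a point that is not a common endpoint. -/
def Cross (p : ℕ → ℂ) (e f : ℕ × ℕ) : Prop :=
  ∃ z, z ∈ Seg p e ∧ z ∈ Seg p f ∧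
    ¬((z = p e.1 ∨ z = p e.2) ∧ (z = p f.1 ∨ z = p f.2))

/-- Slope of the segment `γ(e.1, e.2)`. -/
def slope (p : ℕ → ℂ) (e : ℕ × ℕ) : ℝ :=
  ((p e.2).im - (p e.1).im) / ((p e.2).re - (p e.1).re)

def ValidPair (n : ℕ) (e : ℕ × ℕ) : Prop := e.1 < e.2 ∧ e.2 ≤ n + 2

/-- A triangulation of `P(Q)`: a maximal collection of pairwise noncrossing segments. -/
def IsTriangulation (n : ℕ) (p : ℕ → ℂ) (T : Finset (ℕ × ℕ)) : Prop :=
  (∀ e ∈ T, ValidPair n e) ∧ (∀ e ∈ T, ∀ f ∈ T, e ≠ f → ¬Cross p e f) ∧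
    ∀ e, ValidPair n e → e ∉ T → ∃ f ∈ T, Cross p e f

/-- Cross product of two planar vectors; positive iff `(u, v)` is counterclockwise. -/
def cross2 (u v : ℂ) : ℝ := u.re * v.im - u.im * v.re

/-- Arrows of the adjacency quiver `Q(T)` of a triangulation `T`: `e → f` whenever
`e` and `f` are sides of a common triangle of `T` and `f` follows `e` going
counterclockwise around that triangle. -/
def TriArrow (p : ℕ → ℂ) (T : Finset (ℕ × ℕ)) (e f : ℕ × ℕ) : Prop :=
  ∃ a b c : ℕ, a < b ∧ b < c ∧ (a, b) ∈ T ∧ (b, c) ∈ T ∧ (a, c) ∈ T ∧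
    ((0 < cross2 (p b - p a) (p c - p a) ∧
        ((e = (a, b) ∧ f = (b, c)) ∨ (e = (b, c) ∧ f = (a, c)) ∨
          (e = (a, c) ∧ f = (a, b)))) ∨
      (cross2 (p b - p a) (p c - p a) < 0 ∧
        ((e = (a, c) ∧ f = (b, c)) ∨ (e = (b, c) ∧ f = (a, b)) ∨
          (e = (a, b) ∧ f = (a, c)))))

/-! ### Representations of `Q` -/

/-- A finite dimensional representation of the quiver `Q` of type `A_{n+2}` over `k`.
The vector spaces are indexed by `ℕ`, and are required to vanish outside the set
`{1, …, n+2}` of vertices of `Q`.  For each `i`, `fwd i : V i → V (i+1)` is the structure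
map of the arrow `i → i+1` (it is required to vanish when the arrow is oriented in the
other direction, i.e. `ε i = false`) and `bwd i : V (i+1) → V i` is the structure map of
the arrow `i+1 → i` (required to vanish when `ε i = true`). -/
structure ARep (k : Type) [Field k] (n : ℕ) (ε : ℕ → Bool) where
  V : ℕ → Type
  [acg : ∀ x, AddCommGroup (V x)]
  [mod : ∀ x, Module k (V x)]
  [fdim : ∀ x, FiniteDimensional k (V x)]
  triv : ∀ x, x = 0 ∨ n + 2 < x → ∀ v : V x, v = 0
  fwd : ∀ i, V i →ₗ[k] V (i + 1)
  bwd : ∀ i, V (i + 1) →ₗ[k] V i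
  fwd_zero : ∀ i, ε i = false → fwd i = 0
  bwd_zero : ∀ i, ε i = true → bwd i = 0

attribute [instance] ARep.acg ARep.mod ARep.fdim

variable {k : Type} [Field k] {n : ℕ} {ε : ℕ → Bool}

/-- Morphisms of representations. -/
@[ext]
structure ARep.Hom (M N : ARep k n ε) where
  app : ∀ x, M.V x →ₗ[k] N.V x
  comm_fwd : ∀ i (v : M.V i), app (i + 1) (M.fwd i v) = N.fwd i (app i v)
  comm_bwd : ∀ i (v : M.V (i + 1)), app i (M.bwd i v) = N.bwd i (app (i + 1) v)

/-- The identity morphism. -/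
def ARep.Hom.id (M : ARep k n ε) : M.Hom M :=
  ⟨fun _ => LinearMap.id, fun _ _ => rfl, fun _ _ => rfl⟩

/-- Composition of morphisms. -/
def ARep.Hom.comp {M N P : ARep k n ε} (g : N.Hom P) (f : M.Hom N) : M.Hom P where
  app x := (g.app x).comp (f.app x)
  comm_fwd i v := by simp only [LinearMap.comp_apply, f.comm_fwd, g.comm_fwd]
  comm_bwd i v := by simp only [LinearMap.comp_apply, f.comm_bwd, g.comm_bwd]

/-- Sum of two morphisms. -/
def ARep.Hom.add {M N : ARep k n ε} (f g : M.Hom N) : M.Hom N where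
  app x := f.app x + g.app x
  comm_fwd i v := by
    simp only [LinearMap.add_apply, f.comm_fwd, g.comm_fwd, map_add]
  comm_bwd i v := by
    simp only [LinearMap.add_apply, f.comm_bwd, g.comm_bwd, map_add]

/-- Scalar multiple of a morphism. -/
def ARep.Hom.smul {M N : ARep k n ε} (c : k) (f : M.Hom N) : M.Hom N where
  app x := c • f.app x
  comm_fwd i v := by simp only [LinearMap.smul_apply, f.comm_fwd, map_smul]
  comm_bwd i v := by simp only [LinearMap.smul_apply, f.comm_bwd, map_smul]

/-- Isomorphism of representations. -/
def ARep.Iso (M N : ARep k n ε) : Prop :=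
  ∃ f : M.Hom N, ∀ x, Function.Bijective (f.app x)

/-- The zero representation(s). -/
def ARep.IsZero (M : ARep k n ε) : Prop := ∀ x, ∀ v : M.V x, v = 0

/-- The support of a representation. -/
def ARep.supp (M : ARep k n ε) : Set ℕ := {x | ∃ v : M.V x, v ≠ 0}

/-- Direct sum of two representations. -/
def ARep.dsum (M N : ARep k n ε) : ARep k n ε where
  V x := M.V x × N.V x
  acg _ := by infer_instance
  mod _ := by infer_instance
  fdim _ := by infer_instance
  triv x hx v := by
    have h1 := M.triv x hx v.1
    have h2 := N.triv x hx v.2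
    exact Prod.ext h1 h2
  fwd i := (M.fwd i).prodMap (N.fwd i)
  bwd i := (M.bwd i).prodMap (N.bwd i)
  fwd_zero i h := by
    show (M.fwd i).prodMap (N.fwd i) = 0
    rw [M.fwd_zero i h, N.fwd_zero i h]
    apply LinearMap.ext; rintro ⟨a, b⟩; simp
  bwd_zero i h := by
    show (M.bwd i).prodMap (N.bwd i) = 0
    rw [M.bwd_zero i h, N.bwd_zero i h]
    apply LinearMap.ext; rintro ⟨a, b⟩; simp

/-- One dimensional space `k` if `P` holds, `0` otherwise (as a submodule of `k`). -/
def fiber (k : Type) [Field k] (P : Prop) : Submodule k k := if P then ⊤ else ⊥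

/-- The canonical map `fiber k P → fiber k Q` : "identity" if `P ∧ Q`, zero otherwise. -/
def fiberMap (k : Type) [Field k] (P Q : Prop) : fiber k P →ₗ[k] fiber k Q :=
  if h : P ∧ Q then
    { toFun := fun v => ⟨(v : k), by rw [fiber, if_pos h.2]; exact Submodule.mem_top⟩
      map_add' := fun _ _ => rfl
      map_smul' := fun _ _ => rfl }
  else 0

/-- The zero representation. -/
def zeroRep (k : Type) [Field k] (n : ℕ) (ε : ℕ → Bool) : ARep k n ε where
  V _ := ↥(fiber k False)
  acg _ := by infer_instance
  mod _ := by infer_instance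
  fdim _ := by infer_instance
  triv x _ v := by
    have hfib : fiber k False = ⊥ := if_neg (fun h : False => h.elim)
    obtain ⟨w, hw⟩ := v
    apply Subtype.ext
    have hb : w ∈ (⊥ : Submodule k k) := hfib ▸ hw
    exact (Submodule.mem_bot k).1 hb
  fwd _ := 0
  bwd _ := 0
  fwd_zero _ _ := rfl
  bwd_zero _ _ := rfl

/-- The condition for a vertex `x` to be in the support of the interval representation
`M(i,j)`. -/
def SuppCond (n i j x : ℕ) : Prop := i ≤ x ∧ x ≤ j ∧ 1 ≤ x ∧ x ≤ n + 2

/-- The interval (string) representation `M(i,j)` of `Q`: one dimensional at each vertex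
`x` with `i ≤ x ≤ j`, zero elsewhere, with identity maps on all arrows whose endpoints
both lie in `[i,j]`. -/
def intervalRep (k : Type) [Field k] (n : ℕ) (ε : ℕ → Bool) (i j : ℕ) : ARep k n ε where
  V x := ↥(fiber k (SuppCond n i j x))
  acg _ := by infer_instance
  mod _ := by infer_instance
  fdim _ := by infer_instance
  triv x hx v := by
    have hP : ¬SuppCond n i j x := by simp only [SuppCond]; omega
    have hfib : fiber k (SuppCond n i j x) = ⊥ := if_neg hP
    obtain ⟨w, hw⟩ := v
    apply Subtype.ext
    have hb : w ∈ (⊥ : Submodule k k) := hfib ▸ hw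
    exact (Submodule.mem_bot k).1 hb
  fwd ℓ :=
    if ε ℓ = true then fiberMap k (SuppCond n i j ℓ) (SuppCond n i j (ℓ + 1)) else 0
  bwd ℓ :=
    if ε ℓ = true then 0 else fiberMap k (SuppCond n i j (ℓ + 1)) (SuppCond n i j ℓ)
  fwd_zero ℓ h := by simp [h]
  bwd_zero ℓ h := by simp [h]

/-- Direct sum of a list of representations. -/
def dsumList (k : Type) [Field k] (n : ℕ) (ε : ℕ → Bool) :
    List (ARep k n ε) → ARep k n ε
  | [] => zeroRep k n ε
  | M :: L => M.dsum (dsumList k n ε L)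

/-- Indecomposable representations. -/
def ARep.Indec (M : ARep k n ε) : Prop :=
  ¬M.IsZero ∧ ∀ A B : ARep k n ε, M.Iso (A.dsum B) → A.IsZero ∨ B.IsZero

/-- `A` is a direct summand of `T`. -/
def ARep.IsSummand (A T : ARep k n ε) : Prop := ∃ B : ARep k n ε, T.Iso (A.dsum B)

/-- A representation is basic when it has no repeated indecomposable direct summand. -/
def ARep.Basic (T : ARep k n ε) : Prop :=
  ∀ A : ARep k n ε, A.Indec → ¬(A.dsum A).IsSummand T

/-- A short exact sequence `0 → B → E → A → 0`. -/
structure SES (B A : ARep k n ε) where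
  E : ARep k n ε
  ι : B.Hom E
  π : E.Hom A
  inj : ∀ x, Function.Injective (ι.app x)
  surj : ∀ x, Function.Surjective (π.app x)
  exct : ∀ x (v : E.V x), π.app x v = 0 ↔ ∃ u, ι.app x u = v

/-- A short exact sequence splits. -/
def SES.Splits {B A : ARep k n ε} (σ : SES B A) : Prop :=
  ∃ r : σ.E.Hom B, ∀ x (v : B.V x), r.app x (σ.ι.app x v) = v

/-- `Ext¹(A, B) = 0` : every short exact sequence `0 → B → E → A → 0` splits. -/
def ExtZero (A B : ARep k n ε) : Prop := ∀ σ : SES B A, σ.Splits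

/-- `Ext¹(A,B) ≅ k`, generated by (the class of) a short exact sequence
`0 → B → E → A → 0` with indecomposable middle term `E`: there is a non-split such
sequence `σ` with `σ.E` indecomposable such that every non-split sequence is equivalent
to a nonzero scalar multiple of `σ`. -/
def ExtOneDimIndecMid (A B : ARep k n ε) : Prop :=
  ∃ σ : SES B A, ¬σ.Splits ∧ σ.E.Indec ∧
    ∀ τ : SES B A, ¬τ.Splits → ∃ c : k, c ≠ 0 ∧
      ∃ φ : σ.E.Hom τ.E, (∀ x, Function.Bijective (φ.app x)) ∧
        (∀ x (v : B.V x), φ.app x (σ.ι.app x v) = τ.ι.app x v) ∧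
        (∀ x (v : σ.E.V x), τ.π.app x (φ.app x v) = c • σ.π.app x v)

/-- Almost rigid representations. -/
def AlmostRigid (T : ARep k n ε) : Prop :=
  T.Basic ∧ ∀ A B : ARep k n ε, A.Indec → B.Indec → A.IsSummand T → B.IsSummand T →
    ExtZero A B ∨ ExtOneDimIndecMid A B

/-- Maximal almost rigid representations. -/
def MaxAlmostRigid (T : ARep k n ε) : Prop :=
  AlmostRigid T ∧ ∀ M : ARep k n ε, ¬M.IsZero → ¬AlmostRigid (T.dsum M)

/-- `f` is a section. -/
def ARep.Hom.IsSection {M N : ARep k n ε} (f : M.Hom N) : Prop :=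
  ∃ g : N.Hom M, ∀ x (v : M.V x), g.app x (f.app x v) = v

/-- `f` is a retraction. -/
def ARep.Hom.IsRetraction {M N : ARep k n ε} (f : M.Hom N) : Prop :=
  ∃ g : N.Hom M, ∀ x (v : N.V x), f.app x (g.app x v) = v

/-- Irreducible morphisms: `f` is neither a section nor a retraction, and in every
factorization `f = g ∘ h` either `h` is a section or `g` is a retraction. -/
def ARep.Hom.Irred {M N : ARep k n ε} (f : M.Hom N) : Prop :=
  ¬f.IsSection ∧ ¬f.IsRetraction ∧
    ∀ (Z : ARep k n ε) (h : M.Hom Z) (g : Z.Hom N),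
      (∀ x (v : M.V x), f.app x v = g.app x (h.app x v)) → h.IsSection ∨ g.IsRetraction

/-- Subrepresentations : families of subspaces closed under the structure maps. -/
structure Subrep (M : ARep k n ε) where
  U : ∀ x, Submodule k (M.V x)
  fwd_mem : ∀ i, ∀ v ∈ U i, M.fwd i v ∈ U (i + 1)
  bwd_mem : ∀ i, ∀ v ∈ U (i + 1), M.bwd i v ∈ U i

/-- The central charge `Z(M) = Σ_{x=1}^{n+2} dim_k(M_x) · (p_x − p_{x−1})`. -/
def charge (p : ℕ → ℂ) (M : ARep k n ε) : ℂ :=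
  ∑ x ∈ Finset.Icc 1 (n + 2), (Module.finrank k (M.V x) : ℂ) * (p x - p (x - 1))

/-- The central charge of a subrepresentation. -/
def subCharge (p : ℕ → ℂ) {M : ARep k n ε} (L : Subrep M) : ℂ :=
  ∑ x ∈ Finset.Icc 1 (n + 2), (Module.finrank k (L.U x) : ℂ) * (p x - p (x - 1))

/-- The representation `F(T) = ⊕_{γ(a,b) ∈ T} M(a+1, b)` attached to a collection `T` of
segments of the polygon `P(Q)`. -/
def FRep (k : Type) [Field k] (n : ℕ) (ε : ℕ → Bool) (T : Finset (ℕ × ℕ)) : ARep k n ε :=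
  dsumList k n ε (T.toList.map fun e => intervalRep k n ε (e.1 + 1) e.2)

end CambrianA

namespace CambrianA


/-! ### Linear algebra: chains of subspaces and adapted projections -/

/-- Solving upwards. -/
theorem solveUp {H : ℕ → Type} (p : ℕ) (hp : H p) (d : ∀ i, H i)
    (E : ∀ i, H i → H (i + 1) → Prop) (step : ∀ i, p ≤ i → ∀ a, ∃ b, E i a b) :
    ∃ h : ∀ i, H i, h p = hp ∧ ∀ i, p ≤ i → E i (h i) (h (i + 1)) := by
  have step' : ∀ i, ∀ a : H i, ∃ b, p ≤ i → E i a b := by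
    intro i a
    by_cases h : p ≤ i
    · obtain ⟨b, hb⟩ := step i h a
      exact ⟨b, fun _ => hb⟩
    · exact ⟨d _, fun h' => absurd h' h⟩
  choose next hnext using step'
  let h : ∀ i, H i := fun i => Nat.rec (motive := H) (Function.update d p hp 0)
    (fun i a => if p ≤ i then next i a else Function.update d p hp (i + 1)) i
  refine ⟨h, ?_, ?_⟩
  · cases p with
    | zero => simp [h]
    | succ p => simp [h]
  · intro i hi
    have : h (i + 1) = next i (h i) := by simp [h, hi]
    rw [this]
    exact hnext i _ hi

/-- Solving downwards. -/
theorem solveDown {H : ℕ → Type} (d : ∀ i, H i)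
    (E : ∀ i, H i → H (i + 1) → Prop) (p : ℕ) (hp : H p)
    (step : ∀ i, i < p → ∀ b, ∃ a, E i a b) :
    ∃ h : ∀ i, H i, h p = hp ∧ ∀ i, i < p → E i (h i) (h (i + 1)) := by
  induction p with
  | zero => exact ⟨Function.update d 0 hp, by simp, by intro i hi; omega⟩
  | succ p ih =>
    obtain ⟨a, ha⟩ := step p (Nat.lt_succ_self p) hp
    obtain ⟨h, h1, h2⟩ := ih a (fun i hi => step i (by omega))
    refine ⟨Function.update h (p + 1) hp, by simp, ?_⟩
    intro i hi
    rw [Function.update_of_ne (by omega : i ≠ p + 1)]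
    rcases Nat.lt_or_eq_of_le (Nat.lt_succ_iff.1 hi) with h' | h'
    · rw [Function.update_of_ne (by omega : i + 1 ≠ p + 1)]
      exact h2 i h'
    · subst h'
      rw [Function.update_self, h1]
      exact ha

/-- A chain of subspaces. -/
structure SubChain (k : Type) [Field k] (V : Type) [AddCommGroup V] [Module k V] where
  C : ℕ → Submodule k V
  mono : Monotone C
  bot : C 0 = ⊥
  top : ∃ m, C m = ⊤

/-- An idempotent preserving a chain. -/
def IdemC {k : Type} [Field k] {V : Type} [AddCommGroup V] [Module k V]
    (S : SubChain k V) (r : V →ₗ[k] V) : Prop :=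
  (∀ v, r (r v) = r v) ∧ ∀ i, ∀ v ∈ S.C i, r v ∈ S.C i

/-- The trivial chain. -/
def trivChain (k : Type) [Field k] (V : Type) [AddCommGroup V] [Module k V] :
    SubChain k V where
  C i := if i = 0 then ⊥ else ⊤
  mono := by
    intro i j hij
    by_cases h : i = 0
    · simp [h]
    · have : j ≠ 0 := by omega
      simp [h, this]
  bot := by simp
  top := ⟨1, by simp⟩

section LinAlg
variable {k : Type} [Field k] {V V' : Type} [AddCommGroup V] [Module k V]
  [AddCommGroup V'] [Module k V']

theorem extendDisjoint (U D W : Submodule k V) (hWD : W ≤ D) (hWU : Disjoint W U) :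
    ∃ W', W ≤ W' ∧ W' ≤ D ∧ Disjoint W' U ∧ D ≤ W' ⊔ (D ⊓ U) := by
  obtain ⟨Z, hZ⟩ := Submodule.exists_isCompl (W ⊔ D ⊓ U)
  refine ⟨W ⊔ (Z ⊓ D), le_sup_left, sup_le hWD inf_le_right, ?_, ?_⟩
  · rw [Submodule.disjoint_def]
    intro x hx hxU
    obtain ⟨w, hw, z, hz, rfl⟩ := Submodule.mem_sup.1 hx
    have hz0 : z = 0 := by
      refine (Submodule.disjoint_def.1 hZ.disjoint) z ?_ hz.1
      have h1 : w + z ∈ D ⊓ U := ⟨D.add_mem (hWD hw) hz.2, hxU⟩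
      have h2 : z = -w + (w + z) := by abel
      rw [h2]
      exact Submodule.add_mem_sup (W.neg_mem hw) h1
    subst hz0
    rw [add_zero] at hxU ⊢
    exact (Submodule.disjoint_def.1 hWU) w hw hxU
  · intro x hx
    have : x ∈ (W ⊔ D ⊓ U) ⊔ Z := by rw [hZ.sup_eq_top]; trivial
    obtain ⟨y, hy, z, hz, rfl⟩ := Submodule.mem_sup.1 this
    obtain ⟨w, hw, u, hu, rfl⟩ := Submodule.mem_sup.1 hy
    have hzD : z ∈ D := by
      have : z = (w + u + z) - (w + u) := by abel
      rw [this]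
      exact D.sub_mem hx (D.add_mem (hWD hw) hu.1)
    have : w + u + z = (w + z) + u := by abel
    rw [this]
    exact Submodule.add_mem_sup (Submodule.add_mem_sup hw ⟨hz, hzD⟩) hu

theorem adaptedRetraction (S : SubChain k V) (U : Submodule k V) :
    ∃ r : V →ₗ[k] V, IdemC S r ∧ (∀ v, r v ∈ U) ∧ (∀ v ∈ U, r v = v) := by
  obtain ⟨W, -, hW⟩ := solveUp
    (H := fun i => {W : Submodule k V // W ≤ S.C i ∧ Disjoint W U ∧ S.C i ≤ W ⊔ (S.C i ⊓ U)})
    0 ⟨⊥, by simp, disjoint_bot_left, by simp [S.bot]⟩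
    (fun i => ⟨_, (extendDisjoint U (S.C i) ⊥ bot_le disjoint_bot_left).choose_spec.2⟩)
    (fun i a b => a.1 ≤ b.1)
    (by
      rintro i - ⟨a, ha, ha', -⟩
      obtain ⟨b, h1, h2⟩ := extendDisjoint U (S.C (i + 1)) a
        (ha.trans (S.mono (Nat.le_succ i))) ha'
      exact ⟨⟨b, h2⟩, h1⟩)
  have hmono : Monotone (fun i => (W i).1) := monotone_nat_of_le_succ fun i => hW i (Nat.zero_le i)
  obtain ⟨m, hm⟩ := S.top
  have hcompl : IsCompl U (W m).1 := by
    refine ⟨(W m).2.2.1.symm, ?_⟩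
    rw [codisjoint_iff_le_sup]
    have h3 : S.C m ≤ U ⊔ (W m).1 :=
      (W m).2.2.2.trans (sup_le le_sup_right (inf_le_right.trans le_sup_left))
    exact hm.symm.le.trans h3
  have hmem : ∀ v, U.projection _ hcompl v ∈ U := fun v => Submodule.projection_apply_mem _ _
  have hid : ∀ v ∈ U, U.projection _ hcompl v = v :=
    fun v hv => Submodule.projection_apply_of_mem_left _ hv
  have hker : ∀ v ∈ (W m).1, U.projection _ hcompl v = 0 := by
    intro v hv
    simp [hv]
  refine ⟨U.projection _ hcompl, ⟨fun v => hid _ (hmem v), ?_⟩, hmem, hid⟩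
  intro i v hv
  rcases le_total i m with him | him
  · obtain ⟨w, hw, u, hu, rfl⟩ := Submodule.mem_sup.1 ((W i).2.2.2 hv)
    rw [map_add, hker w (hmono him hw), hid u hu.2, zero_add]
    exact hu.1
  · have : S.C i = ⊤ := top_le_iff.1 (hm ▸ S.mono him)
    rw [this]; trivial

theorem quasiInverse (f : V →ₗ[k] V') : ∃ t : V' →ₗ[k] V, ∀ v, f (t (f v)) = f v := by
  obtain ⟨t0, ht0⟩ := f.rangeRestrict.exists_rightInverse_of_surjective f.range_rangeRestrict
  obtain ⟨t, ht⟩ := LinearMap.exists_extend t0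
  refine ⟨t, fun v => ?_⟩
  have h1 := LinearMap.congr_fun ht (f.rangeRestrict v)
  have h2 := congrArg Subtype.val (LinearMap.congr_fun ht0 (f.rangeRestrict v))
  simp at h1 h2
  rw [h1]
  exact h2

theorem stepF (f : V →ₗ[k] V') (S' : SubChain k V') :
    ∃ S : SubChain k V, ∀ φ, IdemC S φ → ∃ ψ, IdemC S' ψ ∧ ∀ v, ψ (f v) = f (φ v) := by
  let C : ℕ → Submodule k V := fun i => match i with
    | 0 => ⊥
    | i + 1 => (S'.C i).comap f
  have hCs : ∀ i, C (i + 1) = (S'.C i).comap f := fun i => rfl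
  refine ⟨⟨C, ?_, rfl, ?_⟩, ?_⟩
  · refine monotone_nat_of_le_succ ?_
    intro i
    cases i with
    | zero => exact bot_le
    | succ i => exact Submodule.comap_mono (S'.mono (Nat.le_succ i))
  · obtain ⟨m, hm⟩ := S'.top
    exact ⟨m + 1, by rw [hCs, hm, Submodule.comap_top]⟩
  · rintro φ ⟨hφ, hφC⟩
    obtain ⟨r, hr, hrU, hrid⟩ := adaptedRetraction S' (LinearMap.range f)
    obtain ⟨t, ht⟩ := quasiInverse f
    have hker : ∀ v, f v = 0 → f (φ v) = 0 := by
      intro v hv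
      have := hφC 1 v (by
        show f v ∈ S'.C 0
        rw [hv]; exact zero_mem _)
      have h2 : f (φ v) ∈ S'.C 0 := this
      rw [S'.bot] at h2
      simpa using h2
    have key : ∀ v, f (φ (t (f v))) = f (φ v) := by
      intro v
      have := hker (t (f v) - v) (by rw [map_sub, ht, sub_self])
      rw [map_sub, map_sub, sub_eq_zero] at this
      exact this
    have h1 : ∀ v, f (φ (t (r (f v)))) = f (φ v) := by
      intro v
      rw [hrid _ (LinearMap.mem_range_self f v), key]
    refine ⟨f ∘ₗ φ ∘ₗ t ∘ₗ r, ⟨?_, ?_⟩, h1⟩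
    · intro v
      simp only [LinearMap.comp_apply]
      rw [h1, hφ]
    · intro i v hv
      simp only [LinearMap.comp_apply]
      have h2 := hr.2 i v hv
      obtain ⟨w, hw⟩ := hrU v
      rw [← hw] at h2 ⊢
      rw [key]
      exact hφC (i + 1) w h2

theorem stepG (g : V' →ₗ[k] V) (S' : SubChain k V') :
    ∃ S : SubChain k V, ∀ φ, IdemC S φ → ∃ ψ, IdemC S' ψ ∧ ∀ v, φ (g v) = g (ψ v) := by
  obtain ⟨m, hm⟩ := S'.top
  refine ⟨⟨fun i => if i ≤ m then (S'.C i).map g else ⊤, ?_, by simp [S'.bot],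
    ⟨m + 1, by simp⟩⟩, ?_⟩
  · intro i j hij
    by_cases hj : j ≤ m
    · simp only [hj, hij.trans hj, if_true]
      exact Submodule.map_mono (S'.mono hij)
    · simp [hj]
  · rintro φ ⟨hφ, hφC⟩
    have hφ' : ∀ i, ∀ v ∈ S'.C i, ∃ w ∈ S'.C i, g w = φ (g v) := by
      have aux : ∀ i, i ≤ m → ∀ v ∈ S'.C i, ∃ w ∈ S'.C i, g w = φ (g v) := by
        intro i hi v hv
        have := hφC i (g v)
        simp only [hi, if_true] at this
        exact this (Submodule.mem_map_of_mem hv)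
      intro i
      rcases le_total i m with hi | hi
      · exact aux i hi
      · have : S'.C i = ⊤ := top_le_iff.1 (hm ▸ S'.mono hi)
        rw [this, ← hm]
        exact aux m le_rfl
    obtain ⟨r, hr, hrU, hrid⟩ := adaptedRetraction S' (LinearMap.ker g)
    obtain ⟨t, ht⟩ := quasiInverse g
    have hgr : ∀ v, g (r v) = 0 := fun v => hrU v
    let s : V →ₗ[k] V' := t - r ∘ₗ t
    have hs : ∀ v, s (g v) = v - r v := by
      intro v
      have h1 := hrid (t (g v) - v) (by rw [LinearMap.mem_ker, map_sub, ht, sub_self])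
      rw [map_sub] at h1
      simp only [s, LinearMap.sub_apply, LinearMap.comp_apply]
      rw [sub_eq_sub_iff_add_eq_add] at h1 ⊢
      rw [← h1, add_comm]
    have hg : ∀ v, g (s (φ (g v))) = φ (g v) := by
      intro v
      obtain ⟨w, -, hw⟩ := hφ' m v (by rw [hm]; trivial)
      rw [← hw, hs, map_sub, hgr, sub_zero]
    refine ⟨s ∘ₗ φ ∘ₗ g, ⟨?_, ?_⟩, fun v => (hg v).symm⟩
    · intro v
      simp only [LinearMap.comp_apply]
      rw [hg, hφ]
    · intro i v hv
      simp only [LinearMap.comp_apply]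
      obtain ⟨w, hw, hw'⟩ := hφ' i v hv
      rw [← hw', hs]
      exact sub_mem hw (hr.2 i w hw)

theorem stepFG (f : V →ₗ[k] V') (g : V' →ₗ[k] V) (h0 : f = 0 ∨ g = 0) (S' : SubChain k V') :
    ∃ S : SubChain k V, ∀ φ, IdemC S φ → ∃ ψ, IdemC S' ψ ∧ (∀ v, ψ (f v) = f (φ v)) ∧
      ∀ v, φ (g v) = g (ψ v) := by
  rcases h0 with rfl | rfl
  · obtain ⟨S, hS⟩ := stepG g S'
    refine ⟨S, fun φ hφ => ?_⟩
    obtain ⟨ψ, h1, h2⟩ := hS φ hφ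
    exact ⟨ψ, h1, by simp, h2⟩
  · obtain ⟨S, hS⟩ := stepF f S'
    refine ⟨S, fun φ hφ => ?_⟩
    obtain ⟨ψ, h1, h2⟩ := hS φ hφ
    exact ⟨ψ, h1, h2, by simp⟩

end LinAlg


/-! ### Isomorphisms, kernels and direct sums -/

section Basics
variable {k : Type} [Field k] {n : ℕ} {ε : ℕ → Bool}

theorem ARep.Iso.refl (M : ARep k n ε) : M.Iso M :=
  ⟨ARep.Hom.id M, fun _ => Function.bijective_id⟩

theorem ARep.Iso.trans {M N P : ARep k n ε} (h : M.Iso N) (h' : N.Iso P) : M.Iso P := by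
  obtain ⟨f, hf⟩ := h
  obtain ⟨g, hg⟩ := h'
  exact ⟨g.comp f, fun x => (hg x).comp (hf x)⟩

/-- The inverse of a bijective morphism. -/
def ARep.Hom.inv {M N : ARep k n ε} (f : M.Hom N) (hf : ∀ x, Function.Bijective (f.app x)) :
    N.Hom M where
  app x := (LinearEquiv.ofBijective (f.app x) (hf x)).symm
  comm_fwd i v := by
    apply (hf (i + 1)).1
    have h1 := LinearEquiv.apply_symm_apply (LinearEquiv.ofBijective (f.app (i+1)) (hf (i+1)))
      (N.fwd i v)
    have h2 := LinearEquiv.apply_symm_apply (LinearEquiv.ofBijective (f.app i) (hf i)) v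
    rw [LinearEquiv.ofBijective_apply] at h1 h2
    rw [f.comm_fwd]
    simp only [LinearEquiv.coe_coe]
    rw [h1, h2]
  comm_bwd i v := by
    apply (hf i).1
    have h1 := LinearEquiv.apply_symm_apply (LinearEquiv.ofBijective (f.app i) (hf i))
      (N.bwd i v)
    have h2 := LinearEquiv.apply_symm_apply (LinearEquiv.ofBijective (f.app (i+1)) (hf (i+1))) v
    rw [LinearEquiv.ofBijective_apply] at h1 h2
    rw [f.comm_bwd]
    simp only [LinearEquiv.coe_coe]
    rw [h1, h2]

theorem ARep.Hom.inv_right {M N : ARep k n ε} (f : M.Hom N)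
    (hf : ∀ x, Function.Bijective (f.app x)) (x : ℕ) (v : N.V x) :
    f.app x ((f.inv hf).app x v) = v :=
  LinearEquiv.apply_symm_apply (LinearEquiv.ofBijective (f.app x) (hf x)) v

theorem ARep.Hom.inv_left {M N : ARep k n ε} (f : M.Hom N)
    (hf : ∀ x, Function.Bijective (f.app x)) (x : ℕ) (v : M.V x) :
    (f.inv hf).app x (f.app x v) = v :=
  LinearEquiv.symm_apply_apply (LinearEquiv.ofBijective (f.app x) (hf x)) v

theorem ARep.Iso.symm {M N : ARep k n ε} (h : M.Iso N) : N.Iso M := by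
  obtain ⟨f, hf⟩ := h
  refine ⟨f.inv hf, fun x => ?_⟩
  exact (LinearEquiv.ofBijective (f.app x) (hf x)).symm.bijective

/-- Inclusions and projections of direct sums. -/
def dInl (M N : ARep k n ε) : M.Hom (M.dsum N) where
  app x := LinearMap.inl k (M.V x) (N.V x)
  comm_fwd i v := by
    show ((M.fwd i v, 0) : M.V (i+1) × N.V (i+1)) = (M.fwd i v, N.fwd i 0)
    rw [map_zero]
  comm_bwd i v := by
    show ((M.bwd i v, 0) : M.V i × N.V i) = (M.bwd i v, N.bwd i 0)
    rw [map_zero]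

def dInr (M N : ARep k n ε) : N.Hom (M.dsum N) where
  app x := LinearMap.inr k (M.V x) (N.V x)
  comm_fwd i v := by
    show ((0, N.fwd i v) : M.V (i+1) × N.V (i+1)) = (M.fwd i 0, N.fwd i v)
    rw [map_zero]
  comm_bwd i v := by
    show ((0, N.bwd i v) : M.V i × N.V i) = (M.bwd i 0, N.bwd i v)
    rw [map_zero]

def dFst (M N : ARep k n ε) : (M.dsum N).Hom M where
  app x := LinearMap.fst k (M.V x) (N.V x)
  comm_fwd _ _ := rfl
  comm_bwd _ _ := rfl

def dSnd (M N : ARep k n ε) : (M.dsum N).Hom N where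
  app x := LinearMap.snd k (M.V x) (N.V x)
  comm_fwd _ _ := rfl
  comm_bwd _ _ := rfl

/-- The morphism into a direct sum. -/
def dLift {L M N : ARep k n ε} (f : L.Hom M) (g : L.Hom N) : L.Hom (M.dsum N) where
  app x := (f.app x).prod (g.app x)
  comm_fwd i v := Prod.ext (f.comm_fwd i v) (g.comm_fwd i v)
  comm_bwd i v := Prod.ext (f.comm_bwd i v) (g.comm_bwd i v)

theorem dsum_comm (M N : ARep k n ε) : (M.dsum N).Iso (N.dsum M) :=
  ⟨dLift (dSnd M N) (dFst M N), fun x => (LinearEquiv.prodComm k (M.V x) (N.V x)).bijective⟩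

theorem dsum_assoc (M N P : ARep k n ε) :
    ((M.dsum N).dsum P).Iso (M.dsum (N.dsum P)) :=
  ⟨dLift ((dFst M N).comp (dFst _ P)) (dLift ((dSnd M N).comp (dFst _ P)) (dSnd _ P)),
    fun x => (LinearEquiv.prodAssoc k (M.V x) (N.V x) (P.V x)).bijective⟩

theorem dsum_congr {M M' N N' : ARep k n ε} (h : M.Iso M') (h' : N.Iso N') :
    (M.dsum N).Iso (M'.dsum N') := by
  obtain ⟨f, hf⟩ := h
  obtain ⟨g, hg⟩ := h'
  refine ⟨dLift (f.comp (dFst M N)) (g.comp (dSnd M N)), fun x => ?_⟩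
  exact Function.Bijective.prodMap (hf x) (hg x)

theorem IsSummand.trans {A B C : ARep k n ε} (h : A.IsSummand B) (h' : B.IsSummand C) :
    A.IsSummand C := by
  obtain ⟨B', hB⟩ := h
  obtain ⟨C', hC⟩ := h'
  exact ⟨B'.dsum C', hC.trans ((dsum_congr hB (ARep.Iso.refl C')).trans (dsum_assoc _ _ _))⟩

theorem IsSummand.of_iso {A B : ARep k n ε} (h : B.Iso A) : A.IsSummand B :=
  ⟨zeroRep k n ε, h.trans ⟨dInl _ _, fun x => by
    constructor
    · intro a b hab
      exact congrArg Prod.fst hab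
    · rintro ⟨a, b⟩
      refine ⟨a, ?_⟩
      refine Prod.ext rfl ?_
      have : b = 0 := by
        have hfib : fiber k False = ⊥ := if_neg (fun h : False => h.elim)
        obtain ⟨w, hw⟩ := b
        apply Subtype.ext
        have hb : w ∈ (⊥ : Submodule k k) := hfib ▸ hw
        exact (Submodule.mem_bot k).1 hb
      exact this.symm⟩⟩

/-- The kernel of a morphism. -/
def kerRep {M N : ARep k n ε} (w : M.Hom N) : ARep k n ε where
  V x := ↥(LinearMap.ker (w.app x))
  acg _ := by infer_instance
  mod _ := by infer_instance
  fdim _ := by infer_instance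
  triv x hx v := Subtype.ext (M.triv x hx v.1)
  fwd i := (M.fwd i).restrict (p := LinearMap.ker (w.app i))
      (q := LinearMap.ker (w.app (i + 1))) (fun v hv => by
    rw [LinearMap.mem_ker] at hv ⊢
    rw [w.comm_fwd, hv, map_zero])
  bwd i := (M.bwd i).restrict (p := LinearMap.ker (w.app (i + 1)))
      (q := LinearMap.ker (w.app i)) (fun v hv => by
    rw [LinearMap.mem_ker] at hv ⊢
    rw [w.comm_bwd, hv, map_zero])
  fwd_zero i h := by
    ext v
    simp [M.fwd_zero i h]
  bwd_zero i h := by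
    ext v
    simp [M.bwd_zero i h]

/-- Inclusion of the kernel. -/
def kerIncl {M N : ARep k n ε} (w : M.Hom N) : (kerRep w).Hom M where
  app x := (LinearMap.ker (w.app x)).subtype
  comm_fwd _ _ := rfl
  comm_bwd _ _ := rfl

/-- Lift to the kernel. -/
def kerLift {L M N : ARep k n ε} (w : M.Hom N) (f : L.Hom M)
    (h : ∀ x v, w.app x (f.app x v) = 0) : L.Hom (kerRep w) where
  app x := (f.app x).codRestrict _ (h x)
  comm_fwd i v := Subtype.ext (f.comm_fwd i v)
  comm_bwd i v := Subtype.ext (f.comm_bwd i v)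

/-- Difference of morphisms. -/
def homSub {M N : ARep k n ε} (f g : M.Hom N) : M.Hom N where
  app x := f.app x - g.app x
  comm_fwd i v := by
    simp only [LinearMap.sub_apply, f.comm_fwd, g.comm_fwd, map_sub]
  comm_bwd i v := by
    simp only [LinearMap.sub_apply, f.comm_bwd, g.comm_bwd, map_sub]

theorem split_of_retract {X A : ARep k n ε} (u : X.Hom A) (w : A.Hom X)
    (h : ∀ x v, w.app x (u.app x v) = v) : A.Iso (X.dsum (kerRep w)) := by
  refine ⟨dLift w (kerLift w (homSub (ARep.Hom.id A) (u.comp w)) ?_), fun x => ⟨?_, ?_⟩⟩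
  · intro x v
    show w.app x (v - u.app x (w.app x v)) = 0
    rw [map_sub, h, sub_self]
  · intro a b hab
    have h1 : w.app x a = w.app x b := congrArg Prod.fst hab
    have h2 : a - u.app x (w.app x a) = b - u.app x (w.app x b) :=
      congrArg Subtype.val (congrArg Prod.snd hab)
    rw [h1] at h2
    exact sub_left_injective h2
  · rintro ⟨y, ⟨a, ha⟩⟩
    have ha' : w.app x a = 0 := ha
    refine ⟨u.app x y + a, ?_⟩
    have h1 : w.app x (u.app x y + a) = y := by rw [map_add, h, ha', add_zero]
    refine Prod.ext h1 (Subtype.ext ?_)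
    show (u.app x y + a) - u.app x (w.app x (u.app x y + a)) = a
    rw [h1]; abel

theorem idem_of_indec {M : ARep k n ε} (hM : M.Indec) (e : M.Hom M)
    (he : ∀ x v, e.app x (e.app x v) = e.app x v) :
    (∀ x v, e.app x v = 0) ∨ (∀ x v, e.app x v = v) := by
  let c := homSub (ARep.Hom.id M) e
  have hc : ∀ x v, c.app x v = v - e.app x v := fun x v => rfl
  let w : M.Hom (kerRep c) := kerLift c e (fun x v => by rw [hc, he, sub_self])
  have hiso := split_of_retract (kerIncl c) w (by
    intro x v
    apply Subtype.ext
    have h1 : c.app x v.1 = 0 := v.2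
    rw [hc, sub_eq_zero] at h1
    exact h1.symm)
  rcases hM.2 _ _ hiso with h | h
  · left
    intro x v
    exact congrArg Subtype.val (h x (w.app x v))
  · right
    intro x v
    have h1 : w.app x (v - e.app x v) = 0 := by
      apply Subtype.ext
      show e.app x (v - e.app x v) = 0
      rw [map_sub, he, sub_self]
    have h2 := congrArg Subtype.val (h x ⟨v - e.app x v, h1⟩)
    have h3 : v - e.app x v = 0 := h2
    exact (sub_eq_zero.1 h3).symm

theorem indec_of_idem {M : ARep k n ε} (h0 : ¬M.IsZero)
    (h : ∀ e : M.Hom M, (∀ x v, e.app x (e.app x v) = e.app x v) →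
      (∀ x v, e.app x v = 0) ∨ (∀ x v, e.app x v = v)) : M.Indec := by
  refine ⟨h0, ?_⟩
  rintro A B ⟨f, hf⟩
  let e := ((f.inv hf).comp ((dInl A B).comp (dFst A B))).comp f
  have he : ∀ x v, f.app x (e.app x v) = ((f.app x v).1, 0) := by
    intro x v
    exact f.inv_right hf x _
  have hee : ∀ x v, e.app x (e.app x v) = e.app x v := by
    intro x v
    apply (hf x).1
    rw [he, he]
  rcases h e hee with h | h
  · left
    intro x a
    obtain ⟨v, hv⟩ := (hf x).2 (a, 0)
    have h1 := he x v
    rw [h, hv, map_zero] at h1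
    exact (congrArg Prod.fst h1).symm
  · right
    intro x b
    obtain ⟨v, hv⟩ := (hf x).2 (0, b)
    have h1 := he x v
    rw [h, hv] at h1
    exact congrArg Prod.snd h1

theorem iso_of_zero_right {A X Z : ARep k n ε} (h : A.Iso (X.dsum Z)) (hZ : Z.IsZero) :
    A.Iso X := by
  refine h.trans ⟨dFst X Z, fun x => ⟨?_, fun a => ⟨(a, 0), rfl⟩⟩⟩
  rintro ⟨a, b⟩ ⟨a', b'⟩ hab
  have h1 : a = a' := hab
  have h2 : b = b' := by rw [hZ x b, hZ x b']
  rw [h1, h2]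

/-- Exchange, one-sided form. -/
theorem exchange_aux {T X A C : ARep k n ε} (Φ : (T.dsum X).Hom (A.dsum C))
    (hΦ : ∀ x, Function.Bijective (Φ.app x)) (w : C.Hom X)
    (hw : ∀ x (v : X.V x), w.app x (Φ.app x (0, v)).2 = v) :
    ∃ C', T.Iso (A.dsum C') ∧ C.Iso (X.dsum C') := by
  refine ⟨kerRep w, ?_, split_of_retract (((dSnd A C).comp Φ).comp (dInr T X)) w hw⟩
  let θ : T.Hom (A.dsum C) := homSub (Φ.comp (dInl T X))
    ((((Φ.comp (dInr T X)).comp w).comp (dSnd A C)).comp (Φ.comp (dInl T X)))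
  have hθ : ∀ x v, θ.app x v = Φ.app x (v, - w.app x (Φ.app x (v, 0)).2) := by
    intro x v
    show Φ.app x (v, 0) - Φ.app x (0, w.app x (Φ.app x (v, 0)).2) = _
    refine (map_sub (Φ.app x) _ _).symm.trans (congrArg (Φ.app x) ?_)
    exact Prod.ext (sub_zero _) (zero_sub _)
  have hsplit : ∀ x (t : T.V x) (y : X.V x),
      w.app x (Φ.app x (t, y)).2 = w.app x (Φ.app x (t, 0)).2 + y := by
    intro x t y
    have : ((t, y) : (T.dsum X).V x) = (t, 0) + (0, y) :=
      Prod.ext (add_zero _).symm (zero_add _).symm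
    have h2 : Φ.app x (t, y) = Φ.app x (t, 0) + Φ.app x (0, y) :=
      (congrArg (Φ.app x) this).trans (map_add (Φ.app x) _ _)
    have h3 : (Φ.app x (t, y)).2 = (Φ.app x (t, 0)).2 + (Φ.app x (0, y)).2 :=
      congrArg Prod.snd h2
    rw [h3, map_add, hw]
  refine ⟨dLift ((dFst A C).comp θ) (kerLift w ((dSnd A C).comp θ) ?_), fun x => ⟨?_, ?_⟩⟩
  · intro x v
    show w.app x (θ.app x v).2 = 0
    rw [hθ, hsplit, add_neg_cancel]
  · intro a b hab
    have e1 : (θ.app x a).1 = (θ.app x b).1 :=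
      congrArg (fun z : (A.dsum (kerRep w)).V x => z.1) hab
    have e2 : (θ.app x a).2 = (θ.app x b).2 :=
      congrArg (fun z : (A.dsum (kerRep w)).V x => z.2.1) hab
    have h1 : θ.app x a = θ.app x b := Prod.ext e1 e2
    rw [hθ, hθ] at h1
    exact congrArg Prod.fst ((hΦ x).1 h1)
  · rintro ⟨a, ⟨c, hc⟩⟩
    have hc' : w.app x c = 0 := hc
    obtain ⟨⟨t, y⟩, hty⟩ := (hΦ x).2 (a, c)
    have h1 := hsplit x t y
    rw [hty] at h1
    have h2 : y = - w.app x (Φ.app x (t, 0)).2 := by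
      rw [eq_neg_iff_add_eq_zero, add_comm]
      rw [← h1]; exact hc'
    have h3 : θ.app x t = (a, c) := by
      rw [hθ, ← h2, hty]
    refine ⟨t, Prod.ext ?_ (Subtype.ext ?_)⟩
    · show (θ.app x t).1 = a
      rw [h3]
    · show (θ.app x t).2 = c
      rw [h3]

/-- All endomorphisms are scalars, and the representation is nonzero. -/
def Brick (X : ARep k n ε) : Prop :=
  ¬X.IsZero ∧ ∀ f : X.Hom X, ∃ c : k, ∀ x v, f.app x v = c • v

theorem Brick.indec {X : ARep k n ε} (h : Brick X) : X.Indec := by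
  refine indec_of_idem h.1 ?_
  intro e he
  obtain ⟨c, hc⟩ := h.2 e
  by_cases h0 : c = 0
  · left; intro x v; rw [hc, h0, zero_smul]
  · right; intro x v
    have := he x v
    rw [hc, hc] at this
    rw [hc]
    exact (smul_right_injective _ h0) this

theorem exchange {T X A C : ARep k n ε} (hX : Brick X) (h : (T.dsum X).Iso (A.dsum C)) :
    (∃ C', T.Iso (A.dsum C') ∧ C.Iso (X.dsum C')) ∨
      (∃ A', T.Iso (C.dsum A') ∧ A.Iso (X.dsum A')) := by
  obtain ⟨Φ, hΦ⟩ := h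
  let wA : A.Hom X := (dSnd T X).comp ((Φ.inv hΦ).comp (dInl A C))
  let wC : C.Hom X := (dSnd T X).comp ((Φ.inv hΦ).comp (dInr A C))
  let uA : X.Hom A := (dFst A C).comp (Φ.comp (dInr T X))
  let uC : X.Hom C := (dSnd A C).comp (Φ.comp (dInr T X))
  obtain ⟨a, ha⟩ := hX.2 (wA.comp uA)
  obtain ⟨c, hc⟩ := hX.2 (wC.comp uC)
  have hsum : ∀ x (v : X.V x), (a + c) • v = v := by
    intro x v
    rw [add_smul, ← ha, ← hc]
    show (((Φ.inv hΦ).app x ((Φ.app x (0, v)).1, 0)).2 +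
      ((Φ.inv hΦ).app x (0, (Φ.app x (0, v)).2)).2) = v
    have h1 := Φ.inv_left hΦ x (0, v)
    have h2 : (Φ.app x (0, v)) =
        (((Φ.app x (0, v)).1, 0) : (A.dsum C).V x) + (0, (Φ.app x (0, v)).2) :=
      Prod.ext (add_zero _).symm (zero_add _).symm
    have h3 := (map_add ((Φ.inv hΦ).app x) _ _).symm.trans
      ((congrArg ((Φ.inv hΦ).app x) h2).symm.trans h1)
    exact congrArg Prod.snd h3
  by_cases hc0 : c = 0
  · right
    have ha0 : a ≠ 0 := by
      rintro rfl
      apply hX.1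
      intro x v
      rw [← hsum x v, hc0, add_zero, zero_smul]
    refine exchange_aux ((dLift (dSnd A C) (dFst A C)).comp Φ) (fun x =>
      ((LinearEquiv.prodComm k (A.V x) (C.V x)).bijective).comp (hΦ x))
      (ARep.Hom.smul a⁻¹ wA) ?_
    intro x v
    have h1 := ha x v
    show a⁻¹ • ((wA.comp uA).app x v) = v
    rw [h1, inv_smul_smul₀ ha0]
  · left
    refine exchange_aux Φ hΦ (ARep.Hom.smul c⁻¹ wC) ?_
    intro x v
    have h1 := hc x v
    show c⁻¹ • ((wC.comp uC).app x v) = v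
    rw [h1, inv_smul_smul₀ hc0]

/-- Indecomposable summands of `T ⊕ X`. -/
theorem summand_dsum {T X A : ARep k n ε} (hX : Brick X) (hA : A.Indec)
    (h : A.IsSummand (T.dsum X)) : A.IsSummand T ∨ A.Iso X := by
  obtain ⟨C, hC⟩ := h
  rcases exchange hX hC with ⟨C', h1, -⟩ | ⟨A', -, h2⟩
  · exact Or.inl ⟨C', h1⟩
  · right
    rcases hA.2 _ _ h2 with h | h
    · exact absurd h hX.1
    · exact iso_of_zero_right h2 h

theorem basic_dsum {T X : ARep k n ε} (hX : Brick X) (hT : T.Basic) (hXT : ¬X.IsSummand T) :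
    (T.dsum X).Basic := by
  rintro A hA ⟨C, hC⟩
  rcases exchange hX hC with ⟨C', h1, -⟩ | ⟨A', h1, h2⟩
  · exact hT A hA ⟨C', h1⟩
  · have h3 : (A'.dsum X).Iso (A.dsum A) := (dsum_comm _ _).trans h2.symm
    have h4 : ∃ A'', A'.Iso (A.dsum A'') ∧ A.Iso (X.dsum A'') := by
      rcases exchange hX h3 with h | h <;> exact h
    obtain ⟨A'', h5, h6⟩ := h4
    have h7 : X.IsSummand A := ⟨_, h6⟩
    have h8 : A.IsSummand A' := ⟨_, h5⟩
    have h9 : A'.IsSummand T := ⟨C, h1.trans (dsum_comm _ _)⟩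
    exact hXT (IsSummand.trans (IsSummand.trans h7 h8) h9)

end Basics


/-! ### Lifting idempotents and structure of indecomposables at one arrow -/

section Lifting
variable {k : Type} [Field k] {n : ℕ} {ε : ℕ → Bool}

theorem fwd_or_bwd (B : ARep k n ε) (i : ℕ) : B.fwd i = 0 ∨ B.bwd i = 0 := by
  cases h : ε i
  · exact Or.inl (B.fwd_zero i h)
  · exact Or.inr (B.bwd_zero i h)

/-- Compatibility of a pair of endomorphisms with the arrow `i`. -/
def CommAt (B : ARep k n ε) (i : ℕ) (a : B.V i →ₗ[k] B.V i)
    (b : B.V (i + 1) →ₗ[k] B.V (i + 1)) : Prop :=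
  (∀ v, b (B.fwd i v) = B.fwd i (a v)) ∧ ∀ v, a (B.bwd i v) = B.bwd i (b v)

theorem leftChain (B : ARep k n ε) (p : ℕ) :
    ∃ S : SubChain k (B.V p), ∀ r, IdemC S r → ∃ ψ : ∀ x, B.V x →ₗ[k] B.V x,
      ψ p = r ∧ (∀ x v, ψ x (ψ x v) = ψ x v) ∧
        ∀ i, i < p → CommAt B i (ψ i) (ψ (i + 1)) := by
  obtain ⟨S, -, hS⟩ := solveUp (H := fun i => SubChain k (B.V i)) 0 (trivChain k _)
    (fun i => trivChain k _)
    (fun i S' S => ∀ φ, IdemC S φ → ∃ ψ, IdemC S' ψ ∧ (∀ v, ψ (B.bwd i v) = B.bwd i (φ v)) ∧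
      ∀ v, φ (B.fwd i v) = B.fwd i (ψ v))
    (fun i _ S' => stepFG (B.bwd i) (B.fwd i) (fwd_or_bwd B i).symm S')
  refine ⟨S p, fun r hr => ?_⟩
  obtain ⟨ψ, h1, h2⟩ := solveDown (H := fun i => {r // IdemC (S i) r})
    (fun i => ⟨0, by simp [IdemC]⟩) (fun i a b => CommAt B i a.1 b.1) p ⟨r, hr⟩ (by
      rintro i - ⟨φ, hφ⟩
      obtain ⟨ψ, h1, h2, h3⟩ := hS i (Nat.zero_le i) φ hφ
      exact ⟨⟨ψ, h1⟩, h3, h2⟩)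
  exact ⟨fun x => (ψ x).1, congrArg Subtype.val h1, fun x => (ψ x).2.1, h2⟩

theorem rightChain (B : ARep k n ε) (p : ℕ) :
    ∃ S : SubChain k (B.V p), ∀ r, IdemC S r → ∃ ψ : ∀ x, B.V x →ₗ[k] B.V x,
      ψ p = r ∧ (∀ x v, ψ x (ψ x v) = ψ x v) ∧
        ∀ i, p ≤ i → CommAt B i (ψ i) (ψ (i + 1)) := by
  obtain ⟨S, -, hS⟩ := solveDown (H := fun i => SubChain k (B.V i))
    (fun i => trivChain k _)
    (fun i S S' => ∀ φ, IdemC S φ → ∃ ψ, IdemC S' ψ ∧ (∀ v, ψ (B.fwd i v) = B.fwd i (φ v)) ∧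
      ∀ v, φ (B.bwd i v) = B.bwd i (ψ v)) (n + 3) (trivChain k _)
    (fun i _ S' => stepFG (B.fwd i) (B.bwd i) (fwd_or_bwd B i) S')
  refine ⟨S p, fun r hr => ?_⟩
  obtain ⟨ψ, h1, h2⟩ := solveUp (H := fun i => {r // IdemC (S i) r}) p ⟨r, hr⟩
    (fun i => ⟨0, by simp [IdemC]⟩) (fun i a b => CommAt B i a.1 b.1) (by
      rintro i - ⟨φ, hφ⟩
      by_cases hi : i < n + 3
      · obtain ⟨ψ, h1, h2, h3⟩ := hS i hi φ hφ
        exact ⟨⟨ψ, h1⟩, h2, h3⟩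
      · have z1 := B.triv i (by omega)
        have z2 := B.triv (i + 1) (by omega)
        refine ⟨⟨0, by simp [IdemC]⟩, fun v => ?_, fun v => ?_⟩
        · rw [z1 (φ v), map_zero]; rfl
        · rw [z1 (φ _)]; simp)
  exact ⟨fun x => (ψ x).1, congrArg Subtype.val h1, fun x => (ψ x).2.1, h2⟩

theorem leftGlue {B : ARep k n ε} (hB : B.Indec) (p : ℕ) :
    ∃ S : SubChain k (B.V p), ∀ r, IdemC S r → (∀ v, r (B.bwd p v) = B.bwd p v) →
      (∀ v, B.fwd p (r v) = B.fwd p v) →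
      (∀ v, r v = v) ∨ ((∀ v, r v = 0) ∧ ∀ x, p < x → ∀ v : B.V x, v = 0) := by
  obtain ⟨S, hS⟩ := leftChain B p
  refine ⟨S, fun r hr hb hf => ?_⟩
  obtain ⟨ψ, rfl, h2, h3⟩ := hS r hr
  let a : ∀ x, B.V x →ₗ[k] B.V x := fun x => if x ≤ p then ψ x else LinearMap.id
  have ha : ∀ x, x ≤ p → a x = ψ x := fun x hx => if_pos hx
  have ha' : ∀ x, p < x → a x = LinearMap.id := fun x hx => if_neg (by omega)
  have hc : ∀ i, CommAt B i (a i) (a (i + 1)) := by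
    intro i
    rcases lt_trichotomy i p with h | h | h
    · rw [ha i (by omega), ha (i + 1) (by omega)]
      exact h3 i h
    · subst h
      rw [ha i le_rfl, ha' (i + 1) (by omega)]
      exact ⟨fun v => (hf v).symm, hb⟩
    · rw [ha' i h, ha' (i + 1) (by omega)]
      exact ⟨fun v => rfl, fun v => rfl⟩
  rcases idem_of_indec hB ⟨a, fun i => (hc i).1, fun i => (hc i).2⟩ (by
    intro x v
    show a x (a x v) = a x v
    by_cases h : x ≤ p
    · rw [ha x h, h2]
    · rw [ha' x (by omega)]; rfl) with h | h
  · right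
    refine ⟨fun v => ?_, fun x hx v => ?_⟩
    · have : a p v = 0 := h p v
      rwa [ha p le_rfl] at this
    · have : a x v = 0 := h x v
      rwa [ha' x hx] at this
  · left
    intro v
    have : a p v = v := h p v
    rwa [ha p le_rfl] at this

theorem rightGlue {B : ARep k n ε} (hB : B.Indec) (p : ℕ) :
    ∃ S : SubChain k (B.V (p + 1)), ∀ r, IdemC S r → (∀ v, r (B.fwd p v) = B.fwd p v) →
      (∀ v, B.bwd p (r v) = B.bwd p v) →
      (∀ v, r v = v) ∨ ((∀ v, r v = 0) ∧ ∀ x, x ≤ p → ∀ v : B.V x, v = 0) := by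
  obtain ⟨S, hS⟩ := rightChain B (p + 1)
  refine ⟨S, fun r hr hf hb => ?_⟩
  obtain ⟨ψ, rfl, h2, h3⟩ := hS r hr
  let a : ∀ x, B.V x →ₗ[k] B.V x := fun x => if p < x then ψ x else LinearMap.id
  have ha : ∀ x, p < x → a x = ψ x := fun x hx => if_pos hx
  have ha' : ∀ x, x ≤ p → a x = LinearMap.id := fun x hx => if_neg (by omega)
  have hc : ∀ i, CommAt B i (a i) (a (i + 1)) := by
    intro i
    rcases lt_trichotomy i p with h | h | h
    · rw [ha' i (by omega), ha' (i + 1) (by omega)]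
      exact ⟨fun v => rfl, fun v => rfl⟩
    · subst h
      rw [ha' i le_rfl, ha (i + 1) (by omega)]
      exact ⟨hf, fun v => (hb v).symm⟩
    · rw [ha i h, ha (i + 1) (by omega)]
      exact h3 i h
  rcases idem_of_indec hB ⟨a, fun i => (hc i).1, fun i => (hc i).2⟩ (by
    intro x v
    show a x (a x v) = a x v
    by_cases h : p < x
    · rw [ha x h, h2]
    · rw [ha' x (by omega)]; rfl) with h | h
  · right
    refine ⟨fun v => ?_, fun x hx v => ?_⟩
    · have : a (p + 1) v = 0 := h (p + 1) v
      rwa [ha (p + 1) (by omega)] at this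
    · have : a x v = 0 := h x v
      rwa [ha' x hx] at this
  · left
    intro v
    have : a (p + 1) v = v := h (p + 1) v
    rwa [ha (p + 1) (by omega)] at this

/-- The linear algebra behind the dichotomies: `V` receives `g` and emits `f`. -/
theorem dich_aux {V V' : Type} [AddCommGroup V] [Module k V] [AddCommGroup V'] [Module k V']
    (f : V →ₗ[k] V') (g : V' →ₗ[k] V) (Z : Prop) (hZ : Z → ∀ v : V', v = 0)
    (h : ∃ S : SubChain k V, ∀ r, IdemC S r → (∀ v, r (g v) = g v) → (∀ v, f (r v) = f v) →
      (∀ v, r v = v) ∨ ((∀ v, r v = 0) ∧ Z)) :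
    (f = 0 → Function.Surjective g ∨ (Z ∧ Module.finrank k V = 1)) ∧
      (g = 0 → Function.Injective f ∨ (Z ∧ Module.finrank k V = 1)) := by
  obtain ⟨S, hS⟩ := h
  have hdim : Z → ∀ v : V, v ≠ 0 → Module.finrank k V = 1 := by
    intro z v hv
    obtain ⟨r, hr, hrU, hrid⟩ := adaptedRetraction S (Submodule.span k {v})
    rw [finrank_eq_one_iff']
    refine ⟨v, hv, fun w => ?_⟩
    rcases hS r hr (fun u => by rw [hZ z u]; simp) (fun u => by rw [hZ z (f (r u)), hZ z (f u)])
      with h | h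
    · have := hrU w
      rw [h w] at this
      exact Submodule.mem_span_singleton.1 this
    · have h1 := hrid v (Submodule.mem_span_singleton_self v)
      rw [h.1 v] at h1
      exact absurd h1.symm hv
  constructor
  · intro hf
    obtain ⟨r, hr, hrU, hrid⟩ := adaptedRetraction S (LinearMap.range g)
    rcases hS r hr (fun v => hrid _ (LinearMap.mem_range_self g v)) (by simp [hf]) with h | h
    · left
      intro v
      have := hrU v
      rw [h v] at this
      exact this
    · by_cases h0 : ∃ v : V, v ≠ 0
      · obtain ⟨v, hv⟩ := h0
        exact Or.inr ⟨h.2, hdim h.2 v hv⟩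
      · left
        intro v
        have : v = 0 := by
          by_contra hv
          exact h0 ⟨v, hv⟩
        exact ⟨0, by rw [map_zero, this]⟩
  · intro hg
    obtain ⟨r, hr, hrU, hrid⟩ := adaptedRetraction S (LinearMap.ker f)
    have hrU' : ∀ v, f (r v) = 0 := fun v => hrU v
    rcases hS (LinearMap.id - r) ⟨fun v => by simp [hr.1], fun i v hv => by
        simpa using sub_mem hv (hr.2 i v hv)⟩ (by simp [hg]) (by simp [hrU']) with h | h
    · left
      rw [injective_iff_map_eq_zero]
      intro v hv
      have h1 := h v
      have h2 := hrid v hv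
      simp only [LinearMap.sub_apply, LinearMap.id_apply, h2, sub_self] at h1
      exact h1.symm
    · by_cases h0 : ∃ v : V, v ≠ 0
      · obtain ⟨v, hv⟩ := h0
        exact Or.inr ⟨h.2, hdim h.2 v hv⟩
      · left
        intro v w _
        have : ∀ v : V, v = 0 := by
          intro v
          by_contra hv
          exact h0 ⟨v, hv⟩
        rw [this v, this w]

theorem leftDich {B : ARep k n ε} (hB : B.Indec) (p : ℕ) :
    (ε p = false → Function.Surjective (B.bwd p) ∨
      ((∀ x, p < x → ∀ v : B.V x, v = 0) ∧ Module.finrank k (B.V p) = 1)) ∧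
    (ε p = true → Function.Injective (B.fwd p) ∨
      ((∀ x, p < x → ∀ v : B.V x, v = 0) ∧ Module.finrank k (B.V p) = 1)) := by
  have := dich_aux (B.fwd p) (B.bwd p) (∀ x, p < x → ∀ v : B.V x, v = 0)
    (fun z => z (p + 1) (by omega)) (leftGlue hB p)
  exact ⟨fun h => this.1 (B.fwd_zero p h), fun h => this.2 (B.bwd_zero p h)⟩

theorem rightDich {B : ARep k n ε} (hB : B.Indec) (p : ℕ) :
    (ε p = true → Function.Surjective (B.fwd p) ∨
      ((∀ x, x ≤ p → ∀ v : B.V x, v = 0) ∧ Module.finrank k (B.V (p + 1)) = 1)) ∧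
    (ε p = false → Function.Injective (B.bwd p) ∨
      ((∀ x, x ≤ p → ∀ v : B.V x, v = 0) ∧ Module.finrank k (B.V (p + 1)) = 1)) := by
  have := dich_aux (B.bwd p) (B.fwd p) (∀ x, x ≤ p → ∀ v : B.V x, v = 0)
    (fun z => z p le_rfl) (rightGlue hB p)
  exact ⟨fun h => this.1 (B.bwd_zero p h), fun h => this.2 (B.fwd_zero p h)⟩

end Lifting


/-! ### Extensions via cocycles -/

section Cocycles
variable {k : Type} [Field k] {n : ℕ} {ε : ℕ → Bool}

/-- Cocycles describing extensions of `A` by `B`. -/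
structure Coc (A B : ARep k n ε) where
  f : ∀ i, A.V i →ₗ[k] B.V (i + 1)
  g : ∀ i, A.V (i + 1) →ₗ[k] B.V i
  f_zero : ∀ i, ε i = false → f i = 0
  g_zero : ∀ i, ε i = true → g i = 0

/-- At the arrow `i`, `δ` is `c` times `δ₀` plus the coboundary of `h`. -/
def CohAt {A B : ARep k n ε} (δ : Coc A B) (c : k) (δ₀ : Coc A B) (i : ℕ)
    (a : A.V i →ₗ[k] B.V i) (b : A.V (i + 1) →ₗ[k] B.V (i + 1)) : Prop :=
  (∀ v, δ.f i v = c • δ₀.f i v + (b (A.fwd i v) - B.fwd i (a v))) ∧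
    ∀ v, δ.g i v = c • δ₀.g i v + (a (A.bwd i v) - B.bwd i (b v))

/-- At the arrow `i`, `δ` is the coboundary of `h`. -/
def CobAt {A B : ARep k n ε} (δ : Coc A B) (i : ℕ)
    (a : A.V i →ₗ[k] B.V i) (b : A.V (i + 1) →ₗ[k] B.V (i + 1)) : Prop :=
  (∀ v, δ.f i v = b (A.fwd i v) - B.fwd i (a v)) ∧
    ∀ v, δ.g i v = a (A.bwd i v) - B.bwd i (b v)

/-- The twisted direct sum. -/
def twRep {A B : ARep k n ε} (δ : Coc A B) : ARep k n ε where
  V x := B.V x × A.V x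
  acg _ := by infer_instance
  mod _ := by infer_instance
  fdim _ := by infer_instance
  triv x hx v := Prod.ext (B.triv x hx v.1) (A.triv x hx v.2)
  fwd i := ((B.fwd i).coprod (δ.f i)).prod (A.fwd i ∘ₗ LinearMap.snd k _ _)
  bwd i := ((B.bwd i).coprod (δ.g i)).prod (A.bwd i ∘ₗ LinearMap.snd k _ _)
  fwd_zero i h := by
    rw [B.fwd_zero i h, A.fwd_zero i h, δ.f_zero i h]
    apply LinearMap.ext; rintro ⟨a, b⟩; simp
  bwd_zero i h := by
    rw [B.bwd_zero i h, A.bwd_zero i h, δ.g_zero i h]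
    apply LinearMap.ext; rintro ⟨a, b⟩; simp

theorem twRep_fwd {A B : ARep k n ε} (δ : Coc A B) (i : ℕ) (b : B.V i) (a : A.V i) :
    (twRep δ).fwd i (b, a) = (B.fwd i b + δ.f i a, A.fwd i a) := rfl

theorem twRep_bwd {A B : ARep k n ε} (δ : Coc A B) (i : ℕ) (b : B.V (i + 1))
    (a : A.V (i + 1)) :
    (twRep δ).bwd i (b, a) = (B.bwd i b + δ.g i a, A.bwd i a) := rfl

/-- The twisted extension. -/
def twSES {A B : ARep k n ε} (δ : Coc A B) : SES B A where
  E := twRep δ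
  ι := 
    { app := fun x => LinearMap.inl k (B.V x) (A.V x)
      comm_fwd := fun i v => by
        show ((B.fwd i v, 0) : B.V (i+1) × A.V (i+1)) = (B.fwd i v + δ.f i 0, A.fwd i 0)
        simp
      comm_bwd := fun i v => by
        show ((B.bwd i v, 0) : B.V i × A.V i) = (B.bwd i v + δ.g i 0, A.bwd i 0)
        simp }
  π := 
    { app := fun x => LinearMap.snd k (B.V x) (A.V x)
      comm_fwd := fun _ _ => rfl
      comm_bwd := fun _ _ => rfl }
  inj x := LinearMap.inl_injective
  surj x := LinearMap.snd_surjective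
  exct x := by
    rintro ⟨b, a⟩
    constructor
    · intro h
      have h' : a = 0 := h
      exact ⟨b, by rw [h']; rfl⟩
    · rintro ⟨u, hu⟩
      exact (congrArg Prod.snd hu).symm

theorem tw_splits {A B : ARep k n ε} (δ : Coc A B) (h : (twSES δ).Splits) :
    ∃ h : ∀ x, A.V x →ₗ[k] B.V x, ∀ i, CobAt δ i (h i) (h (i + 1)) := by
  obtain ⟨r, hr⟩ := h
  have hr' : ∀ x (b : B.V x) (a : A.V x), r.app x (b, a) = b + r.app x (0, a) := by
    intro x b a
    have h1 : ((b, a) : B.V x × A.V x) = (b, 0) + (0, a) :=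
      Prod.ext (add_zero _).symm (zero_add _).symm
    have h2 : r.app x (b, a) = r.app x (b, 0) + r.app x (0, a) :=
      (congrArg (r.app x) h1).trans (map_add (r.app x) _ _)
    have h3 : r.app x (b, 0) = b := hr x b
    rw [h2, h3]
  refine ⟨fun x => - ((r.app x) ∘ₗ LinearMap.inr k (B.V x) (A.V x)), fun i => ⟨?_, ?_⟩⟩
  · intro v
    show δ.f i v = - r.app (i + 1) (0, A.fwd i v) - B.fwd i (- r.app i (0, v))
    have h1 : r.app (i + 1) (B.fwd i 0 + δ.f i v, A.fwd i v) = B.fwd i (r.app i (0, v)) :=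
      r.comm_fwd i (0, v)
    rw [hr', map_zero, zero_add] at h1
    rw [map_neg, ← h1]
    abel
  · intro v
    show δ.g i v = - r.app i (0, A.bwd i v) - B.bwd i (- r.app (i + 1) (0, v))
    have h1 : r.app i (B.bwd i 0 + δ.g i v, A.bwd i v) = B.bwd i (r.app (i + 1) (0, v)) :=
      r.comm_bwd i (0, v)
    rw [hr', map_zero, zero_add] at h1
    rw [map_neg, ← h1]
    abel

/-- Every extension comes with a cocycle. -/
theorem ses_coc {A B : ARep k n ε} (τ : SES B A) :
    ∃ (δ : Coc A B) (s : ∀ x, A.V x →ₗ[k] τ.E.V x),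
      (∀ x v, τ.π.app x (s x v) = v) ∧
      (∀ i v, τ.E.fwd i (s i v) = s (i + 1) (A.fwd i v) + τ.ι.app (i + 1) (δ.f i v)) ∧
      (∀ i v, τ.E.bwd i (s (i + 1) v) = s i (A.bwd i v) + τ.ι.app i (δ.g i v)) := by
  have hs : ∀ x, ∃ s : A.V x →ₗ[k] τ.E.V x, τ.π.app x ∘ₗ s = LinearMap.id := fun x =>
    (τ.π.app x).exists_rightInverse_of_surjective (LinearMap.range_eq_top.2 (τ.surj x))
  have hρ : ∀ x, ∃ ρ : τ.E.V x →ₗ[k] B.V x, ρ ∘ₗ τ.ι.app x = LinearMap.id := fun x =>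
    (τ.ι.app x).exists_leftInverse_of_injective (LinearMap.ker_eq_bot.2 (τ.inj x))
  choose s hs using hs
  choose ρ hρ using hρ
  have hs' : ∀ x v, τ.π.app x (s x v) = v := fun x v => LinearMap.congr_fun (hs x) v
  have hρ' : ∀ x v, ρ x (τ.ι.app x v) = v := fun x v => LinearMap.congr_fun (hρ x) v
  have hιρ : ∀ x v, τ.π.app x v = 0 → τ.ι.app x (ρ x v) = v := by
    intro x v hv
    obtain ⟨u, rfl⟩ := (τ.exct x v).1 hv
    rw [hρ']
  refine ⟨⟨fun i => ρ (i + 1) ∘ₗ (τ.E.fwd i ∘ₗ s i - s (i + 1) ∘ₗ A.fwd i),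
    fun i => ρ i ∘ₗ (τ.E.bwd i ∘ₗ s (i + 1) - s i ∘ₗ A.bwd i), ?_, ?_⟩, s, hs', ?_, ?_⟩
  · intro i h
    rw [τ.E.fwd_zero i h, A.fwd_zero i h]; simp
  · intro i h
    rw [τ.E.bwd_zero i h, A.bwd_zero i h]; simp
  · intro i v
    simp only [LinearMap.comp_apply, LinearMap.sub_apply]
    rw [hιρ]
    · abel
    · rw [map_sub, τ.π.comm_fwd, hs', hs', sub_self]
  · intro i v
    simp only [LinearMap.comp_apply, LinearMap.sub_apply]
    rw [hιρ]
    · abel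
    · rw [map_sub, τ.π.comm_bwd, hs', hs', sub_self]

/-- Splitting from a coboundary. -/
theorem splits_of_section {A B : ARep k n ε} (τ : SES B A) (s : A.Hom τ.E)
    (hs : ∀ x v, τ.π.app x (s.app x v) = v) : τ.Splits := by
  have hρ : ∀ x, ∃ ρ : τ.E.V x →ₗ[k] B.V x, ρ ∘ₗ τ.ι.app x = LinearMap.id := fun x =>
    (τ.ι.app x).exists_leftInverse_of_injective (LinearMap.ker_eq_bot.2 (τ.inj x))
  choose ρ hρ using hρ
  have hρ' : ∀ x v, ρ x (τ.ι.app x v) = v := fun x v => LinearMap.congr_fun (hρ x) v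
  have hιρ : ∀ x v, τ.π.app x v = 0 → τ.ι.app x (ρ x v) = v := by
    intro x v hv
    obtain ⟨u, rfl⟩ := (τ.exct x v).1 hv
    rw [hρ']
  have key : ∀ x v, τ.ι.app x (ρ x (v - s.app x (τ.π.app x v))) = v - s.app x (τ.π.app x v) := by
    intro x v
    apply hιρ
    rw [map_sub, hs, sub_self]
  have hπι : ∀ x v, τ.π.app x (τ.ι.app x v) = 0 := fun x v => (τ.exct x _).2 ⟨v, rfl⟩
  refine ⟨⟨fun x => ρ x ∘ₗ (LinearMap.id - s.app x ∘ₗ τ.π.app x), ?_, ?_⟩, ?_⟩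
  · intro i v
    apply τ.inj (i + 1)
    show τ.ι.app (i + 1) (ρ (i + 1) (τ.E.fwd i v - s.app (i + 1) (τ.π.app (i + 1) (τ.E.fwd i v))))
      = τ.ι.app (i + 1) (B.fwd i (ρ i (v - s.app i (τ.π.app i v))))
    rw [key, τ.ι.comm_fwd, key, τ.π.comm_fwd, s.comm_fwd, map_sub]
  · intro i v
    apply τ.inj i
    show τ.ι.app i (ρ i (τ.E.bwd i v - s.app i (τ.π.app i (τ.E.bwd i v))))
      = τ.ι.app i (B.bwd i (ρ (i + 1) (v - s.app (i + 1) (τ.π.app (i + 1) v))))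
    rw [key, τ.ι.comm_bwd, key, τ.π.comm_bwd, s.comm_bwd, map_sub]
  · intro x v
    show ρ x (τ.ι.app x v - s.app x (τ.π.app x (τ.ι.app x v))) = v
    rw [hπι, map_zero, sub_zero, hρ']

theorem extZero_of {A B : ARep k n ε}
    (h : ∀ δ : Coc A B, ∃ h : ∀ x, A.V x →ₗ[k] B.V x, ∀ i, CobAt δ i (h i) (h (i + 1))) :
    ExtZero A B := by
  intro τ
  obtain ⟨δ, s, hs, hf, hg⟩ := ses_coc τ
  obtain ⟨h, hh⟩ := h δ
  have hπι : ∀ x v, τ.π.app x (τ.ι.app x v) = 0 := fun x v => (τ.exct x _).2 ⟨v, rfl⟩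
  refine splits_of_section τ ⟨fun x => s x + τ.ι.app x ∘ₗ h x, ?_, ?_⟩ ?_
  · intro i v
    simp only [LinearMap.add_apply, LinearMap.comp_apply, map_add]
    rw [hf, (hh i).1, ← τ.ι.comm_fwd, map_sub]
    abel
  · intro i v
    simp only [LinearMap.add_apply, LinearMap.comp_apply, map_add]
    rw [hg, (hh i).2, ← τ.ι.comm_bwd, map_sub]
    abel
  · intro x v
    simp only [LinearMap.add_apply, LinearMap.comp_apply, map_add]
    rw [hs, hπι, add_zero]

theorem extOne_of {A B : ARep k n ε} (δ₀ : Coc A B)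
    (hne : ¬ ∃ h : ∀ x, A.V x →ₗ[k] B.V x, ∀ i, CobAt δ₀ i (h i) (h (i + 1)))
    (hind : (twRep δ₀).Indec)
    (h : ∀ δ : Coc A B, ∃ (c : k) (h : ∀ x, A.V x →ₗ[k] B.V x),
      ∀ i, CohAt δ c δ₀ i (h i) (h (i + 1))) :
    ExtOneDimIndecMid A B := by
  refine ⟨twSES δ₀, fun hs => hne (tw_splits δ₀ hs), hind, ?_⟩
  intro τ hτ
  obtain ⟨δ, s, hs, hf, hg⟩ := ses_coc τ
  obtain ⟨c, h, hh⟩ := h δ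
  have hπι : ∀ x v, τ.π.app x (τ.ι.app x v) = 0 := fun x v => (τ.exct x _).2 ⟨v, rfl⟩
  let s' : ∀ x, A.V x →ₗ[k] τ.E.V x := fun x => s x + τ.ι.app x ∘ₗ h x
  have hs' : ∀ x v, τ.π.app x (s' x v) = v := by
    intro x v
    simp only [s', LinearMap.add_apply, LinearMap.comp_apply, map_add]
    rw [hs, hπι, add_zero]
  have hf' : ∀ i v, τ.E.fwd i (s' i v) =
      s' (i + 1) (A.fwd i v) + c • τ.ι.app (i + 1) (δ₀.f i v) := by
    intro i v
    simp only [s', LinearMap.add_apply, LinearMap.comp_apply, map_add]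
    rw [hf, (hh i).1, ← τ.ι.comm_fwd, map_add, map_sub, map_smul]
    abel
  have hg' : ∀ i v, τ.E.bwd i (s' (i + 1) v) =
      s' i (A.bwd i v) + c • τ.ι.app i (δ₀.g i v) := by
    intro i v
    simp only [s', LinearMap.add_apply, LinearMap.comp_apply, map_add]
    rw [hg, (hh i).2, ← τ.ι.comm_bwd, map_add, map_sub, map_smul]
    abel
  have hc : c ≠ 0 := by
    rintro rfl
    apply hτ
    refine splits_of_section τ ⟨s', ?_, ?_⟩ hs'
    · intro i v
      rw [hf', zero_smul, add_zero]
    · intro i v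
      rw [hg', zero_smul, add_zero]
  let φ : ∀ x, (B.V x × A.V x) →ₗ[k] τ.E.V x := fun x => (τ.ι.app x).coprod (c⁻¹ • s' x)
  have hφ : ∀ x b a, φ x (b, a) = τ.ι.app x b + c⁻¹ • s' x a := fun x b a => rfl
  have hπφ : ∀ x b a, τ.π.app x (φ x (b, a)) = c⁻¹ • a := by
    intro x b a
    rw [hφ, map_add, hπι, map_smul, hs', zero_add]
  refine ⟨c⁻¹, inv_ne_zero hc, ⟨φ, ?_, ?_⟩, fun x => ⟨?_, ?_⟩, ?_, ?_⟩
  · rintro i ⟨b, a⟩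
    show φ (i + 1) (B.fwd i b + δ₀.f i a, A.fwd i a) = τ.E.fwd i (φ i (b, a))
    rw [hφ, hφ, map_add, map_add, map_smul, hf', smul_add, inv_smul_smul₀ hc, τ.ι.comm_fwd]
    abel
  · rintro i ⟨b, a⟩
    show φ i (B.bwd i b + δ₀.g i a, A.bwd i a) = τ.E.bwd i (φ (i + 1) (b, a))
    rw [hφ, hφ, map_add, map_add, map_smul, hg', smul_add, inv_smul_smul₀ hc, τ.ι.comm_bwd]
    abel
  · show Function.Injective (φ x)
    rw [injective_iff_map_eq_zero]
    rintro ⟨b, a⟩ hab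
    have h1 := hπφ x b a
    rw [hab, map_zero] at h1
    have ha : a = 0 := by
      have := h1.symm
      rwa [smul_eq_zero_iff_right (inv_ne_zero hc)] at this
    rw [hφ, ha, map_zero, smul_zero, add_zero] at hab
    have hb : b = 0 := by
      apply τ.inj x
      rw [hab, map_zero]
    rw [ha, hb]; rfl
  · intro v
    have h1 : τ.π.app x (v - s' x (τ.π.app x v)) = 0 := by
      rw [map_sub, hs', sub_self]
    obtain ⟨b, hb⟩ := (τ.exct x _).1 h1
    refine ⟨(b, c • τ.π.app x v), ?_⟩
    show φ x (b, c • τ.π.app x v) = v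
    rw [hφ, map_smul, inv_smul_smul₀ hc, hb]
    abel
  · intro x v
    show φ x (v, 0) = _
    rw [hφ, map_zero, smul_zero, add_zero]
  · rintro x ⟨b, a⟩
    exact hπφ x b a

/-- Disjoint supports. -/
def Disj (A B : ARep k n ε) : Prop := ∀ x, (∀ a : A.V x, a = 0) ∨ (∀ b : B.V x, b = 0)

theorem tw_indec {A B : ARep k n ε} (hA : A.Indec) (hB : B.Indec) (hd : Disj A B)
    (δ : Coc A B) (hδ : (∃ i v, δ.f i v ≠ 0) ∨ (∃ i v, δ.g i v ≠ 0)) : (twRep δ).Indec := by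
  refine indec_of_idem ?_ ?_
  · intro h
    apply hA.1
    intro x a
    exact congrArg Prod.snd (h x (0, a))
  intro e he
  -- the blocks of e
  let eB : ∀ x, B.V x →ₗ[k] B.V x := fun x =>
    LinearMap.fst k (B.V x) (A.V x) ∘ₗ e.app x ∘ₗ LinearMap.inl k (B.V x) (A.V x)
  let eA : ∀ x, A.V x →ₗ[k] A.V x := fun x =>
    LinearMap.snd k (B.V x) (A.V x) ∘ₗ e.app x ∘ₗ LinearMap.inr k (B.V x) (A.V x)
  have hzero : ∀ x, e.app x ((0, 0) : B.V x × A.V x) = ((0, 0) : B.V x × A.V x) :=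
    fun x => map_zero (e.app x)
  have hl : ∀ x b, e.app x (b, 0) = (eB x b, 0) := by
    intro x b
    rcases hd x with h | h
    · exact Prod.ext rfl (h _)
    · refine Prod.ext rfl ?_
      show (e.app x (b, 0)).2 = 0
      rw [h b, hzero]
  have hr : ∀ x a, e.app x (0, a) = (0, eA x a) := by
    intro x a
    rcases hd x with h | h
    · refine Prod.ext ?_ rfl
      show (e.app x (0, a)).1 = 0
      rw [h a, hzero]
    · exact Prod.ext (h _) rfl
  have hboth : ∀ x b a, e.app x (b, a) = (eB x b, eA x a) := by
    intro x b a
    rcases hd x with h | h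
    · rw [h a, hl, map_zero]
    · rw [h b, hr, map_zero]
  have hff : ∀ i b a, eB (i + 1) (B.fwd i b + δ.f i a) = B.fwd i (eB i b) + δ.f i (eA i a) ∧
      eA (i + 1) (A.fwd i a) = A.fwd i (eA i a) := by
    intro i b a
    have h1 : e.app (i + 1) (B.fwd i b + δ.f i a, A.fwd i a) =
        (twRep δ).fwd i (e.app i (b, a)) := e.comm_fwd i (b, a)
    rw [hboth, hboth, twRep_fwd] at h1
    exact ⟨congrArg Prod.fst h1, congrArg Prod.snd h1⟩
  have hbb : ∀ i b a, eB i (B.bwd i b + δ.g i a) = B.bwd i (eB (i + 1) b) + δ.g i (eA (i + 1) a) ∧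
      eA i (A.bwd i a) = A.bwd i (eA (i + 1) a) := by
    intro i b a
    have h1 : e.app i (B.bwd i b + δ.g i a, A.bwd i a) =
        (twRep δ).bwd i (e.app (i + 1) (b, a)) := e.comm_bwd i (b, a)
    rw [hboth, hboth, twRep_bwd] at h1
    exact ⟨congrArg Prod.fst h1, congrArg Prod.snd h1⟩
  have hidem : ∀ x b a, eB x (eB x b) = eB x b ∧ eA x (eA x a) = eA x a := by
    intro x b a
    have h1 := he x (b, a)
    rw [hboth, hboth] at h1
    have h2 := Prod.ext_iff.1 h1
    exact ⟨h2.1, h2.2⟩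
  have hf0 : ∀ i a, eB (i + 1) (δ.f i a) = δ.f i (eA i a) := by
    intro i a
    have := (hff i 0 a).1
    simpa using this
  have hg0 : ∀ i a, eB i (δ.g i a) = δ.g i (eA (i + 1) a) := by
    intro i a
    have := (hbb i 0 a).1
    simpa using this
  have hBid := idem_of_indec hB ⟨eB, fun i v => by simpa using (hff i v 0).1,
    fun i v => by simpa using (hbb i v 0).1⟩ (fun x v => (hidem x v 0).1)
  have hAid := idem_of_indec hA ⟨eA, fun i v => (hff i 0 v).2,
    fun i v => (hbb i 0 v).2⟩ (fun x v => (hidem x 0 v).2)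
  change (∀ x v, eB x v = 0) ∨ (∀ x v, eB x v = v) at hBid
  change (∀ x v, eA x v = 0) ∨ (∀ x v, eA x v = v) at hAid
  rcases hBid with h1 | h1 <;> rcases hAid with h2 | h2
  · left
    rintro x ⟨b, a⟩
    rw [hboth, h1, h2]; rfl
  · exfalso
    rcases hδ with ⟨i, v, hv⟩ | ⟨i, v, hv⟩
    · have := hf0 i v
      rw [h1, h2] at this
      exact hv this.symm
    · have := hg0 i v
      rw [h1, h2] at this
      exact hv this.symm
  · exfalso
    rcases hδ with ⟨i, v, hv⟩ | ⟨i, v, hv⟩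
    · have := hf0 i v
      rw [h1, h2, map_zero] at this
      exact hv this
    · have := hg0 i v
      rw [h1, h2, map_zero] at this
      exact hv this
  · right
    rintro x ⟨b, a⟩
    rw [hboth, h1, h2]

/-- Nonzero generator of the one dimensional Hom space. -/
theorem hom_gen {V V' : Type} [AddCommGroup V] [Module k V] [AddCommGroup V'] [Module k V']
    [FiniteDimensional k V] [FiniteDimensional k V']
    (h : Module.finrank k V = 1) (h' : Module.finrank k V' = 1) :
    ∃ d : V →ₗ[k] V', d ≠ 0 ∧ ∀ f : V →ₗ[k] V', ∃ c : k, c • d = f := by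
  have : Module.finrank k (V →ₗ[k] V') = 1 := by
    rw [Module.finrank_linearMap, h, h']
  exact finrank_eq_one_iff'.1 this

theorem finrank_ne {V : Type} [AddCommGroup V] [Module k V] (h : Module.finrank k V = 1) :
    ¬ ∀ v : V, v = 0 := by
  intro h0
  obtain ⟨v, hv, -⟩ := finrank_eq_one_iff'.1 h
  exact hv (h0 v)

theorem extOne_bwd {A B : ARep k n ε} (hA : A.Indec) (hB : B.Indec) (hd : Disj A B) (p : ℕ)
    (hε : ε p = false) (hAp : Module.finrank k (A.V (p + 1)) = 1)
    (hBp : Module.finrank k (B.V p) = 1)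
    (hsol : ∀ δ : Coc A B, ∃ h : ∀ x, A.V x →ₗ[k] B.V x,
      ∀ i, i ≠ p → CobAt δ i (h i) (h (i + 1))) : ExtOneDimIndecMid A B := by
  obtain ⟨d, hd0, hdgen⟩ := hom_gen hAp hBp
  have zA : ∀ a : A.V p, a = 0 := (hd p).resolve_right (finrank_ne hBp)
  have zB : ∀ b : B.V (p + 1), b = 0 := (hd (p + 1)).resolve_left (finrank_ne hAp)
  let δ₀ : Coc A B := ⟨fun i => 0, Function.update (fun i => 0) p d, fun _ _ => rfl, by
    intro i hi
    have : i ≠ p := by rintro rfl; rw [hε] at hi; cases hi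
    rw [Function.update_of_ne this]⟩
  have e1 : δ₀.g p = d := by simp [δ₀]
  have e2 : ∀ i, i ≠ p → δ₀.g i = 0 := fun i hi => by simp [δ₀, hi]
  have e3 : ∀ i, δ₀.f i = 0 := fun i => rfl
  refine extOne_of δ₀ ?_ ?_ ?_
  · rintro ⟨h, hh⟩
    apply hd0
    ext v
    have := (hh p).2 v
    rw [e1, zA (A.bwd p v), zB (h (p + 1) v)] at this
    simpa using this
  · refine tw_indec hA hB hd δ₀ (Or.inr ⟨p, ?_⟩)
    by_contra hcon
    push Not at hcon
    apply hd0
    ext v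
    rw [← e1]
    exact hcon v
  · intro δ
    obtain ⟨h, hh⟩ := hsol δ
    obtain ⟨c, hc⟩ := hdgen (δ.g p)
    refine ⟨c, h, fun i => ?_⟩
    by_cases hi : i = p
    · subst hi
      refine ⟨fun v => ?_, fun v => ?_⟩
      · rw [zB (δ.f i v), e3, zB (h (i + 1) _), zB (B.fwd i _)]
        simp
      · rw [e1, ← hc, zA (A.bwd i v), zB (h (i + 1) v)]
        simp
    · refine ⟨fun v => ?_, fun v => ?_⟩
      · rw [(hh i hi).1, e3]; simp
      · rw [(hh i hi).2, e2 i hi]; simp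

theorem extOne_fwd {A B : ARep k n ε} (hA : A.Indec) (hB : B.Indec) (hd : Disj A B) (p : ℕ)
    (hε : ε p = true) (hAp : Module.finrank k (A.V p) = 1)
    (hBp : Module.finrank k (B.V (p + 1)) = 1)
    (hsol : ∀ δ : Coc A B, ∃ h : ∀ x, A.V x →ₗ[k] B.V x,
      ∀ i, i ≠ p → CobAt δ i (h i) (h (i + 1))) : ExtOneDimIndecMid A B := by
  obtain ⟨d, hd0, hdgen⟩ := hom_gen hAp hBp
  have zA : ∀ a : A.V (p + 1), a = 0 := (hd (p + 1)).resolve_right (finrank_ne hBp)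
  have zB : ∀ b : B.V p, b = 0 := (hd p).resolve_left (finrank_ne hAp)
  let δ₀ : Coc A B := ⟨Function.update (fun i => 0) p d, fun i => 0, by
    intro i hi
    have : i ≠ p := by rintro rfl; rw [hε] at hi; cases hi
    rw [Function.update_of_ne this], fun _ _ => rfl⟩
  have e1 : δ₀.f p = d := by simp [δ₀]
  have e2 : ∀ i, i ≠ p → δ₀.f i = 0 := fun i hi => by simp [δ₀, hi]
  have e3 : ∀ i, δ₀.g i = 0 := fun i => rfl
  refine extOne_of δ₀ ?_ ?_ ?_
  · rintro ⟨h, hh⟩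
    apply hd0
    ext v
    have := (hh p).1 v
    rw [e1, zA (A.fwd p v), zB (h p v)] at this
    simpa using this
  · refine tw_indec hA hB hd δ₀ (Or.inl ⟨p, ?_⟩)
    by_contra hcon
    push Not at hcon
    apply hd0
    ext v
    rw [← e1]
    exact hcon v
  · intro δ
    obtain ⟨h, hh⟩ := hsol δ
    obtain ⟨c, hc⟩ := hdgen (δ.f p)
    refine ⟨c, h, fun i => ?_⟩
    by_cases hi : i = p
    · subst hi
      refine ⟨fun v => ?_, fun v => ?_⟩
      · rw [e1, ← hc, zA (A.fwd i v), zB (h i v)]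
        simp
      · rw [zB (δ.g i v), e3, zB (h i _), zB (B.bwd i _)]
        simp
    · refine ⟨fun v => ?_, fun v => ?_⟩
      · rw [(hh i hi).1, e2 i hi]; simp
      · rw [(hh i hi).2, e3]; simp

end Cocycles

section Paths
variable {k : Type} [Field k] {n : ℕ} {ε : ℕ → Bool}

/-- Sufficient conditions for the coboundary equations at `i`. -/
theorem cobAt_of {A B : ARep k n ε} {δ : Coc A B} {i : ℕ} {a : A.V i →ₗ[k] B.V i}
    {b : A.V (i + 1) →ₗ[k] B.V (i + 1)}
    (hf : ε i = false ∨ (∀ v : A.V i, v = 0) ∨ (∀ v : B.V (i + 1), v = 0) ∨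
      ∀ v, δ.f i v = b (A.fwd i v) - B.fwd i (a v))
    (hg : ε i = true ∨ (∀ v : A.V (i + 1), v = 0) ∨ (∀ v : B.V i, v = 0) ∨
      ∀ v, δ.g i v = a (A.bwd i v) - B.bwd i (b v)) : CobAt δ i a b := by
  refine ⟨fun v => ?_, fun v => ?_⟩
  · rcases hf with h | h | h | h
    · rw [δ.f_zero i h, A.fwd_zero i h, B.fwd_zero i h]; simp
    · rw [h v]; simp
    · rw [h (δ.f i v), h (b _), h (B.fwd i _)]; simp
    · exact h v
  · rcases hg with h | h | h | h
    · rw [δ.g_zero i h, A.bwd_zero i h, B.bwd_zero i h]; simp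
    · rw [h v]; simp
    · rw [h (δ.g i v), h (a _), h (B.bwd i _)]; simp
    · exact h v

/-- Representations which look like a maximal increasing path `p+1 → ⋯ → hi`. -/
structure PathInc (X : ARep k n ε) (p hi : ℕ) : Prop where
  le1 : p + 1 ≤ hi
  le2 : hi ≤ n + 2
  zl : ∀ x, x ≤ p → ∀ v : X.V x, v = 0
  zr : ∀ x, hi < x → ∀ v : X.V x, v = 0
  one : ∀ x, p < x → x ≤ hi → Module.finrank k (X.V x) = 1
  up : ∀ i, p < i → i < hi → ε i = true ∧ Function.Bijective (X.fwd i)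
  endl : p = 0 ∨ ε p = false
  endr : hi = n + 2 ∨ ε hi = false

/-- Representations which look like a maximal decreasing path `hi → ⋯ → p+1`. -/
structure PathDec (X : ARep k n ε) (p hi : ℕ) : Prop where
  le1 : p + 1 ≤ hi
  le2 : hi ≤ n + 2
  zl : ∀ x, x ≤ p → ∀ v : X.V x, v = 0
  zr : ∀ x, hi < x → ∀ v : X.V x, v = 0
  one : ∀ x, p < x → x ≤ hi → Module.finrank k (X.V x) = 1
  dn : ∀ i, p < i → i < hi → ε i = false ∧ Function.Bijective (X.bwd i)
  endl : p = 0 ∨ ε p = true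
  endr : hi = n + 2 ∨ ε hi = true

theorem inc_sol1 {X B : ARep k n ε} {p hi : ℕ} (hX : PathInc X p hi) (δ : Coc X B)
    (a₀ : X.V (p + 1) →ₗ[k] B.V (p + 1)) : ∃ h : ∀ x, X.V x →ₗ[k] B.V x, h (p + 1) = a₀ ∧
      ∀ i, i ≠ p → CobAt δ i (h i) (h (i + 1)) := by
  have step : ∀ i, p + 1 ≤ i → ∀ a : X.V i →ₗ[k] B.V i,
      ∃ b : X.V (i + 1) →ₗ[k] B.V (i + 1), CobAt δ i a b := by
    intro i hi1 a
    by_cases hlt : i < hi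
    · obtain ⟨h1, h2⟩ := hX.up i (by omega) hlt
      let e := LinearEquiv.ofBijective (X.fwd i) h2
      refine ⟨(δ.f i + (B.fwd i).comp a).comp e.symm.toLinearMap, cobAt_of ?_ (Or.inl h1)⟩
      refine Or.inr (Or.inr (Or.inr fun v => ?_))
      have : e.symm (X.fwd i v) = v := e.symm_apply_apply v
      simp [this]
    · have z : ∀ v : X.V (i + 1), v = 0 := hX.zr _ (by omega)
      refine ⟨0, cobAt_of ?_ (Or.inr (Or.inl z))⟩
      by_cases he : i = hi
      · subst he
        rcases hX.endr with h | h
        · exact Or.inr (Or.inr (Or.inl (B.triv _ (by omega))))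
        · exact Or.inl h
      · exact Or.inr (Or.inl (hX.zr _ (by omega)))
  obtain ⟨h, h0, hs⟩ := solveUp (H := fun x => X.V x →ₗ[k] B.V x) (p + 1) a₀ (fun _ => 0)
    (fun i a b => CobAt δ i a b) step
  refine ⟨h, h0, fun i hi' => ?_⟩
  rcases Nat.lt_or_ge i (p + 1) with hlt | hge
  · exact cobAt_of (Or.inr (Or.inl (hX.zl _ (by omega)))) (Or.inr (Or.inl (hX.zl _ (by omega))))
  · exact hs i hge

theorem inc_sol2 {A X : ARep k n ε} {p hi : ℕ} (hX : PathInc X p hi) (δ : Coc A X)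
    (a₀ : A.V hi →ₗ[k] X.V hi) : ∃ h : ∀ x, A.V x →ₗ[k] X.V x, h hi = a₀ ∧
      ∀ i, i ≠ hi → CobAt δ i (h i) (h (i + 1)) := by
  have step : ∀ i, i < hi → ∀ b : A.V (i + 1) →ₗ[k] X.V (i + 1),
      ∃ a : A.V i →ₗ[k] X.V i, CobAt δ i a b := by
    intro i hi1 b
    by_cases hlt : p < i
    · obtain ⟨h1, h2⟩ := hX.up i hlt hi1
      let e := LinearEquiv.ofBijective (X.fwd i) h2
      refine ⟨e.symm.toLinearMap.comp (b.comp (A.fwd i) - δ.f i), cobAt_of ?_ (Or.inl h1)⟩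
      refine Or.inr (Or.inr (Or.inr fun v => ?_))
      have : ∀ w, X.fwd i (e.symm w) = w := fun w => e.apply_symm_apply w
      simp [this]
    · have z : ∀ v : X.V i, v = 0 := hX.zl _ (by omega)
      refine ⟨0, cobAt_of ?_ (Or.inr (Or.inr (Or.inl z)))⟩
      by_cases he : i = p
      · subst he
        rcases hX.endl with h | h
        · exact Or.inr (Or.inl (A.triv _ (Or.inl h)))
        · exact Or.inl h
      · exact Or.inr (Or.inr (Or.inl (hX.zl _ (by omega))))
  obtain ⟨h, h0, hs⟩ := solveDown (H := fun x => A.V x →ₗ[k] X.V x) (fun _ => 0)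
    (fun i a b => CobAt δ i a b) hi a₀ step
  refine ⟨h, h0, fun i hi' => ?_⟩
  rcases Nat.lt_or_ge i hi with hlt | hge
  · exact hs i hlt
  · exact cobAt_of (Or.inr (Or.inr (Or.inl (hX.zr _ (by omega)))))
      (Or.inr (Or.inr (Or.inl (hX.zr _ (by omega)))))

theorem dec_sol1 {X B : ARep k n ε} {p hi : ℕ} (hX : PathDec X p hi) (δ : Coc X B)
    (a₀ : X.V hi →ₗ[k] B.V hi) : ∃ h : ∀ x, X.V x →ₗ[k] B.V x, h hi = a₀ ∧
      ∀ i, i ≠ hi → CobAt δ i (h i) (h (i + 1)) := by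
  have step : ∀ i, i < hi → ∀ b : X.V (i + 1) →ₗ[k] B.V (i + 1),
      ∃ a : X.V i →ₗ[k] B.V i, CobAt δ i a b := by
    intro i hi1 b
    by_cases hlt : p < i
    · obtain ⟨h1, h2⟩ := hX.dn i hlt hi1
      let e := LinearEquiv.ofBijective (X.bwd i) h2
      refine ⟨(δ.g i + (B.bwd i).comp b).comp e.symm.toLinearMap, cobAt_of (Or.inl h1) ?_⟩
      refine Or.inr (Or.inr (Or.inr fun v => ?_))
      have : e.symm (X.bwd i v) = v := e.symm_apply_apply v
      simp [this]
    · have z : ∀ v : X.V i, v = 0 := hX.zl _ (by omega)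
      refine ⟨0, cobAt_of (Or.inr (Or.inl z)) ?_⟩
      by_cases he : i = p
      · subst he
        rcases hX.endl with h | h
        · exact Or.inr (Or.inr (Or.inl (B.triv _ (Or.inl h))))
        · exact Or.inl h
      · exact Or.inr (Or.inl (hX.zl _ (by omega)))
  obtain ⟨h, h0, hs⟩ := solveDown (H := fun x => X.V x →ₗ[k] B.V x) (fun _ => 0)
    (fun i a b => CobAt δ i a b) hi a₀ step
  refine ⟨h, h0, fun i hi' => ?_⟩
  rcases Nat.lt_or_ge i hi with hlt | hge
  · exact hs i hlt
  · exact cobAt_of (Or.inr (Or.inl (hX.zr _ (by omega)))) (Or.inr (Or.inl (hX.zr _ (by omega))))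

theorem dec_sol2 {A X : ARep k n ε} {p hi : ℕ} (hX : PathDec X p hi) (δ : Coc A X)
    (a₀ : A.V (p + 1) →ₗ[k] X.V (p + 1)) : ∃ h : ∀ x, A.V x →ₗ[k] X.V x, h (p + 1) = a₀ ∧
      ∀ i, i ≠ p → CobAt δ i (h i) (h (i + 1)) := by
  have step : ∀ i, p + 1 ≤ i → ∀ a : A.V i →ₗ[k] X.V i,
      ∃ b : A.V (i + 1) →ₗ[k] X.V (i + 1), CobAt δ i a b := by
    intro i hi1 a
    by_cases hlt : i < hi
    · obtain ⟨h1, h2⟩ := hX.dn i (by omega) hlt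
      let e := LinearEquiv.ofBijective (X.bwd i) h2
      refine ⟨e.symm.toLinearMap.comp (a.comp (A.bwd i) - δ.g i), cobAt_of (Or.inl h1) ?_⟩
      refine Or.inr (Or.inr (Or.inr fun v => ?_))
      have : ∀ w, X.bwd i (e.symm w) = w := fun w => e.apply_symm_apply w
      simp [this]
    · have z : ∀ v : X.V (i + 1), v = 0 := hX.zr _ (by omega)
      refine ⟨0, cobAt_of (Or.inr (Or.inr (Or.inl z))) ?_⟩
      by_cases he : i = hi
      · subst he
        rcases hX.endr with h | h
        · exact Or.inr (Or.inl (A.triv _ (by omega)))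
        · exact Or.inl h
      · exact Or.inr (Or.inr (Or.inl (hX.zr _ (by omega))))
  obtain ⟨h, h0, hs⟩ := solveUp (H := fun x => A.V x →ₗ[k] X.V x) (p + 1) a₀ (fun _ => 0)
    (fun i a b => CobAt δ i a b) step
  refine ⟨h, h0, fun i hi' => ?_⟩
  rcases Nat.lt_or_ge i (p + 1) with hlt | hge
  · exact cobAt_of (Or.inr (Or.inr (Or.inl (hX.zl _ (by omega)))))
      (Or.inr (Or.inr (Or.inl (hX.zl _ (by omega)))))
  · exact hs i hge

theorem inc_ext1 {X B : ARep k n ε} {p hi : ℕ} (hX : PathInc X p hi) (iX : X.Indec)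
    (iB : B.Indec) : ExtZero X B ∨ ExtOneDimIndecMid X B := by
  have main : Function.Surjective (B.bwd p) → ExtZero X B := by
    intro hs
    obtain ⟨r, hr⟩ := LinearMap.exists_rightInverse_of_surjective (B.bwd p)
      (LinearMap.range_eq_top.2 hs)
    have hr' : ∀ w, B.bwd p (r w) = w := fun w => LinearMap.congr_fun hr w
    refine extZero_of fun δ => ?_
    obtain ⟨h, h0, hh⟩ := inc_sol1 hX δ (-(r.comp (δ.g p)))
    refine ⟨h, fun i => ?_⟩
    by_cases hi' : i = p
    · subst hi'
      refine cobAt_of (Or.inr (Or.inl (hX.zl _ le_rfl))) (Or.inr (Or.inr (Or.inr fun v => ?_)))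
      rw [h0, hX.zl i le_rfl (X.bwd i v)]
      simp [hr']
    · exact hh i hi'
  rcases hX.endl with h0 | hε
  · exact Or.inl (main fun w => ⟨0, by rw [B.triv p (Or.inl h0) w, map_zero]⟩)
  · rcases (leftDich iB p).1 hε with hs | ⟨hz, h1⟩
    · exact Or.inl (main hs)
    · right
      refine extOne_bwd iX iB (fun x => ?_) p hε (hX.one _ (by omega) hX.le1) h1 fun δ => ?_
      · rcases Nat.lt_or_ge p x with h | h
        · exact Or.inr (hz x h)
        · exact Or.inl (hX.zl x h)
      · obtain ⟨h, -, hh⟩ := inc_sol1 hX δ 0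
        exact ⟨h, hh⟩

theorem inc_ext2 {A X : ARep k n ε} {p hi : ℕ} (hX : PathInc X p hi) (iX : X.Indec)
    (iA : A.Indec) : ExtZero A X ∨ ExtOneDimIndecMid A X := by
  have main : Function.Injective (A.bwd hi) → ExtZero A X := by
    intro hs
    obtain ⟨r, hr⟩ := LinearMap.exists_leftInverse_of_injective (A.bwd hi)
      (LinearMap.ker_eq_bot.2 hs)
    have hr' : ∀ w, r (A.bwd hi w) = w := fun w => LinearMap.congr_fun hr w
    refine extZero_of fun δ => ?_
    obtain ⟨h, h0, hh⟩ := inc_sol2 hX δ ((δ.g hi).comp r)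
    refine ⟨h, fun i => ?_⟩
    by_cases hi' : i = hi
    · subst hi'
      refine cobAt_of (Or.inr (Or.inr (Or.inl (hX.zr _ (by omega)))))
        (Or.inr (Or.inr (Or.inr fun v => ?_)))
      rw [h0, hX.zr (i + 1) (by omega) (h (i + 1) v)]
      simp [hr']
    · exact hh i hi'
  rcases hX.endr with h0 | hε
  · refine Or.inl (main fun v w _ => ?_)
    rw [A.triv (hi + 1) (by omega) v, A.triv (hi + 1) (by omega) w]
  · rcases (rightDich iA hi).2 hε with hs | ⟨hz, h1⟩
    · exact Or.inl (main hs)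
    · right
      refine extOne_bwd iA iX (fun x => ?_) hi hε h1 (hX.one _ hX.le1 le_rfl) fun δ => ?_
      · rcases Nat.lt_or_ge hi x with h | h
        · exact Or.inr (hX.zr x h)
        · exact Or.inl (hz x h)
      · obtain ⟨h, -, hh⟩ := inc_sol2 hX δ 0
        exact ⟨h, hh⟩

theorem dec_ext1 {X B : ARep k n ε} {p hi : ℕ} (hX : PathDec X p hi) (iX : X.Indec)
    (iB : B.Indec) : ExtZero X B ∨ ExtOneDimIndecMid X B := by
  have main : Function.Surjective (B.fwd hi) → ExtZero X B := by
    intro hs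
    obtain ⟨r, hr⟩ := LinearMap.exists_rightInverse_of_surjective (B.fwd hi)
      (LinearMap.range_eq_top.2 hs)
    have hr' : ∀ w, B.fwd hi (r w) = w := fun w => LinearMap.congr_fun hr w
    refine extZero_of fun δ => ?_
    obtain ⟨h, h0, hh⟩ := dec_sol1 hX δ (-(r.comp (δ.f hi)))
    refine ⟨h, fun i => ?_⟩
    by_cases hi' : i = hi
    · subst hi'
      refine cobAt_of (Or.inr (Or.inr (Or.inr fun v => ?_)))
        (Or.inr (Or.inl (hX.zr _ (by omega))))
      rw [h0, hX.zr (i + 1) (by omega) (X.fwd i v)]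
      simp [hr']
    · exact hh i hi'
  rcases hX.endr with h0 | hε
  · exact Or.inl (main fun w => ⟨0, by rw [B.triv (hi + 1) (by omega) w, map_zero]⟩)
  · rcases (rightDich iB hi).1 hε with hs | ⟨hz, h1⟩
    · exact Or.inl (main hs)
    · right
      refine extOne_fwd iX iB (fun x => ?_) hi hε (hX.one _ hX.le1 le_rfl) h1 fun δ => ?_
      · rcases Nat.lt_or_ge hi x with h | h
        · exact Or.inl (hX.zr x h)
        · exact Or.inr (hz x h)
      · obtain ⟨h, -, hh⟩ := dec_sol1 hX δ 0
        exact ⟨h, hh⟩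

theorem dec_ext2 {A X : ARep k n ε} {p hi : ℕ} (hX : PathDec X p hi) (iX : X.Indec)
    (iA : A.Indec) : ExtZero A X ∨ ExtOneDimIndecMid A X := by
  have main : Function.Injective (A.fwd p) → ExtZero A X := by
    intro hs
    obtain ⟨r, hr⟩ := LinearMap.exists_leftInverse_of_injective (A.fwd p)
      (LinearMap.ker_eq_bot.2 hs)
    have hr' : ∀ w, r (A.fwd p w) = w := fun w => LinearMap.congr_fun hr w
    refine extZero_of fun δ => ?_
    obtain ⟨h, h0, hh⟩ := dec_sol2 hX δ ((δ.f p).comp r)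
    refine ⟨h, fun i => ?_⟩
    by_cases hi' : i = p
    · subst hi'
      refine cobAt_of (Or.inr (Or.inr (Or.inr fun v => ?_)))
        (Or.inr (Or.inr (Or.inl (hX.zl _ le_rfl))))
      rw [h0, hX.zl i le_rfl (h i v)]
      simp [hr']
    · exact hh i hi'
  rcases hX.endl with h0 | hε
  · refine Or.inl (main fun v w _ => ?_)
    rw [A.triv p (Or.inl h0) v, A.triv p (Or.inl h0) w]
  · rcases (leftDich iA p).2 hε with hs | ⟨hz, h1⟩
    · exact Or.inl (main hs)
    · right
      refine extOne_fwd iA iX (fun x => ?_) p hε h1 (hX.one _ (by omega) hX.le1) fun δ => ?_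
      · rcases Nat.lt_or_ge p x with h | h
        · exact Or.inl (hz x h)
        · exact Or.inr (hX.zl x h)
      · obtain ⟨h, -, hh⟩ := dec_sol2 hX δ 0
        exact ⟨h, hh⟩

theorem PathInc.of_iso {A X : ARep k n ε} {p hi : ℕ} (hX : PathInc X p hi) (h : A.Iso X) :
    PathInc A p hi := by
  obtain ⟨f, hf⟩ := h
  refine ⟨hX.le1, hX.le2, ?_, ?_, ?_, ?_, hX.endl, hX.endr⟩
  · intro x hx v
    exact (hf x).1 (by rw [map_zero]; exact hX.zl x hx _)
  · intro x hx v
    exact (hf x).1 (by rw [map_zero]; exact hX.zr x hx _)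
  · intro x h1 h2
    rw [← hX.one x h1 h2]
    exact (LinearEquiv.ofBijective (f.app x) (hf x)).finrank_eq
  · intro i h1 h2
    obtain ⟨h3, h4⟩ := hX.up i h1 h2
    refine ⟨h3, ?_⟩
    have : Function.Bijective (f.app (i + 1) ∘ A.fwd i) := by
      have e : f.app (i + 1) ∘ A.fwd i = X.fwd i ∘ f.app i := funext fun v => f.comm_fwd i v
      rw [e]
      exact h4.comp (hf i)
    exact (Function.Bijective.of_comp_iff' (hf (i + 1)) _).1 this

theorem PathDec.of_iso {A X : ARep k n ε} {p hi : ℕ} (hX : PathDec X p hi) (h : A.Iso X) :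
    PathDec A p hi := by
  obtain ⟨f, hf⟩ := h
  refine ⟨hX.le1, hX.le2, ?_, ?_, ?_, ?_, hX.endl, hX.endr⟩
  · intro x hx v
    exact (hf x).1 (by rw [map_zero]; exact hX.zl x hx _)
  · intro x hx v
    exact (hf x).1 (by rw [map_zero]; exact hX.zr x hx _)
  · intro x h1 h2
    rw [← hX.one x h1 h2]
    exact (LinearEquiv.ofBijective (f.app x) (hf x)).finrank_eq
  · intro i h1 h2
    obtain ⟨h3, h4⟩ := hX.dn i h1 h2
    refine ⟨h3, ?_⟩
    have : Function.Bijective (f.app i ∘ A.bwd i) := by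
      have e : f.app i ∘ A.bwd i = X.bwd i ∘ f.app (i + 1) := funext fun v => f.comm_bwd i v
      rw [e]
      exact h4.comp (hf (i + 1))
    exact (Function.Bijective.of_comp_iff' (hf i) _).1 this

theorem fiber_zero {P : Prop} (h : ¬P) (v : fiber k P) : v = 0 := by
  have hfib : fiber k P = ⊥ := if_neg h
  obtain ⟨w, hw⟩ := v
  apply Subtype.ext
  have hb : w ∈ (⊥ : Submodule k k) := hfib ▸ hw
  exact (Submodule.mem_bot k).1 hb

theorem fiber_one {P : Prop} (h : P) : Module.finrank k (fiber k P) = 1 := by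
  have hfib : fiber k P = ⊤ := if_pos h
  rw [hfib]
  simp

theorem fiberMap_bij {P Q : Prop} (hP : P) (hQ : Q) :
    Function.Bijective (fiberMap k P Q) := by
  have e : ∀ v, ((fiberMap k P Q v : fiber k Q) : k) = v := by
    intro v
    rw [fiberMap, dif_pos ⟨hP, hQ⟩]
    rfl
  constructor
  · intro v w h
    apply Subtype.ext
    rw [← e v, ← e w, h]
  · intro w
    refine ⟨⟨w.1, by rw [fiber, if_pos hP]; exact Submodule.mem_top⟩, ?_⟩
    apply Subtype.ext
    rw [e]

theorem interval_inc {p hi : ℕ} (le1 : p + 1 ≤ hi) (le2 : hi ≤ n + 2)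
    (hup : ∀ ℓ, p + 1 ≤ ℓ → ℓ < hi → ε ℓ = true) (hl : p = 0 ∨ ε p = false)
    (hr : hi = n + 2 ∨ ε hi = false) : PathInc (intervalRep k n ε (p + 1) hi) p hi := by
  refine ⟨le1, le2, ?_, ?_, ?_, ?_, hl, hr⟩
  · intro x hx v
    exact fiber_zero (by simp only [SuppCond]; omega) v
  · intro x hx v
    exact fiber_zero (by simp only [SuppCond]; omega) v
  · intro x h1 h2
    exact fiber_one (by simp only [SuppCond]; omega)
  · intro i h1 h2
    have h3 := hup i h1 h2
    refine ⟨h3, ?_⟩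
    have e : (intervalRep k n ε (p + 1) hi).fwd i =
        fiberMap k (SuppCond n (p + 1) hi i) (SuppCond n (p + 1) hi (i + 1)) := if_pos h3
    rw [e]
    exact fiberMap_bij (by simp only [SuppCond]; omega) (by simp only [SuppCond]; omega)

theorem interval_dec {p hi : ℕ} (le1 : p + 1 ≤ hi) (le2 : hi ≤ n + 2)
    (hdn : ∀ ℓ, p + 1 ≤ ℓ → ℓ < hi → ε ℓ = false) (hl : p = 0 ∨ ε p = true)
    (hr : hi = n + 2 ∨ ε hi = true) : PathDec (intervalRep k n ε (p + 1) hi) p hi := by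
  refine ⟨le1, le2, ?_, ?_, ?_, ?_, hl, hr⟩
  · intro x hx v
    exact fiber_zero (by simp only [SuppCond]; omega) v
  · intro x hx v
    exact fiber_zero (by simp only [SuppCond]; omega) v
  · intro x h1 h2
    exact fiber_one (by simp only [SuppCond]; omega)
  · intro i h1 h2
    have h3 := hdn i h1 h2
    refine ⟨h3, ?_⟩
    have e : (intervalRep k n ε (p + 1) hi).bwd i =
        fiberMap k (SuppCond n (p + 1) hi (i + 1)) (SuppCond n (p + 1) hi i) :=
      if_neg (by rw [h3]; decide)
    rw [e]
    exact fiberMap_bij (by simp only [SuppCond]; omega) (by simp only [SuppCond]; omega)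

/-- An endomorphism of a one dimensional space is a scalar. -/
theorem end_scalar {V : Type} [AddCommGroup V] [Module k V] (h : Module.finrank k V = 1)
    (f : V →ₗ[k] V) : ∃ c : k, ∀ v, f v = c • v := by
  obtain ⟨v, hv, hg⟩ := finrank_eq_one_iff'.1 h
  obtain ⟨c, hc⟩ := hg (f v)
  refine ⟨c, fun w => ?_⟩
  obtain ⟨d, rfl⟩ := hg w
  rw [map_smul, ← hc, smul_comm]

theorem PathInc.brick {X : ARep k n ε} {p hi : ℕ} (hX : PathInc X p hi) : Brick X := by
  refine ⟨fun h => finrank_ne (hX.one hi hX.le1 le_rfl) (h hi), fun f => ?_⟩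
  obtain ⟨c, hc⟩ := end_scalar (hX.one (p + 1) (by omega) hX.le1) (f.app (p + 1))
  refine ⟨c, fun x => ?_⟩
  induction x with
  | zero => intro v; rw [hX.zl 0 (by omega) v]; simp
  | succ i ih =>
    intro v
    by_cases h1 : i + 1 ≤ p
    · rw [hX.zl _ h1 v]; simp
    by_cases h2 : hi < i + 1
    · rw [hX.zr _ h2 v]; simp
    by_cases h3 : i = p
    · subst h3; exact hc v
    obtain ⟨-, hb⟩ := hX.up i (by omega) (by omega)
    obtain ⟨w, rfl⟩ := hb.2 v
    rw [f.comm_fwd, ih, map_smul]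

theorem PathDec.brick {X : ARep k n ε} {p hi : ℕ} (hX : PathDec X p hi) : Brick X := by
  refine ⟨fun h => finrank_ne (hX.one hi hX.le1 le_rfl) (h hi), fun f => ?_⟩
  obtain ⟨c, hc⟩ := end_scalar (hX.one (p + 1) (by omega) hX.le1) (f.app (p + 1))
  refine ⟨c, fun x => ?_⟩
  induction x with
  | zero => intro v; rw [hX.zl 0 (by omega) v]; simp
  | succ i ih =>
    intro v
    by_cases h1 : i + 1 ≤ p
    · rw [hX.zl _ h1 v]; simp
    by_cases h2 : hi < i + 1
    · rw [hX.zr _ h2 v]; simp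
    by_cases h3 : i = p
    · subst h3; exact hc v
    obtain ⟨-, hb⟩ := hX.dn i (by omega) (by omega)
    apply hb.1
    rw [← f.comm_bwd, ih, map_smul]

/-- A maximal almost rigid representation contains every brick `X` whose extensions with all
indecomposables are harmless. -/
theorem summand_of_good {T X : ARep k n ε} (hT : MaxAlmostRigid T) (hX : Brick X)
    (h1 : ∀ X' B : ARep k n ε, X'.Iso X → X'.Indec → B.Indec →
      ExtZero X' B ∨ ExtOneDimIndecMid X' B)
    (h2 : ∀ X' A : ARep k n ε, X'.Iso X → X'.Indec → A.Indec →
      ExtZero A X' ∨ ExtOneDimIndecMid A X') : X.IsSummand T := by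
  by_contra hXT
  refine hT.2 X hX.1 ⟨basic_dsum hX hT.1.1 hXT, ?_⟩
  intro A B iA iB sA sB
  rcases summand_dsum hX iA sA with hA | hA
  · rcases summand_dsum hX iB sB with hB | hB
    · exact hT.1.2 A B iA iB hA hB
    · exact h2 B A hB iB iA
  · exact h1 A B hA iA iB

theorem summand_inc {T X : ARep k n ε} (hT : MaxAlmostRigid T) {p hi : ℕ}
    (hX : PathInc X p hi) : X.IsSummand T :=
  summand_of_good hT hX.brick (fun _ _ e i j => inc_ext1 (hX.of_iso e) i j)
    (fun _ _ e i j => inc_ext2 (hX.of_iso e) i j)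

theorem summand_dec {T X : ARep k n ε} (hT : MaxAlmostRigid T) {p hi : ℕ}
    (hX : PathDec X p hi) : X.IsSummand T :=
  summand_of_good hT hX.brick (fun _ _ e i j => dec_ext1 (hX.of_iso e) i j)
    (fun _ _ e i j => dec_ext2 (hX.of_iso e) i j)

end Paths

/-- every maximal almost rigid representation of `Q` contains every hook
and cohook representation `H(α)`, `C(α)` as a direct summand. -/
theorem stmt_16 (k : Type) [Field k] (n : ℕ) (ε : ℕ → Bool) (T : ARep k n ε)
    (hT : MaxAlmostRigid T) :
    ∀ a, 1 ≤ a → a ≤ n + 1 → ∀ lo hi, (IsHook n ε a lo hi ∨ IsCohook n ε a lo hi) →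
      (intervalRep k n ε lo hi).IsSummand T := by
  intro a ha1 ha2 lo hi h
  rcases h with h | h
  · unfold IsHook at h
    split_ifs at h with hε
    · obtain ⟨rfl, h1, h2, h3, h4⟩ := h
      obtain ⟨p, rfl⟩ : ∃ p, lo = p + 1 := ⟨lo - 1, by omega⟩
      refine summand_dec hT (interval_dec h2 (by omega) h3 ?_ (Or.inr hε))
      simpa using h4
    · obtain ⟨rfl, h2, h3, h4, h5⟩ := h
      exact summand_inc hT (interval_inc h2 h3 h4 (Or.inr (by simpa using hε)) h5)
  · unfold IsCohook at h
    split_ifs at h with hε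
    · obtain ⟨rfl, h2, h3, h4, h5⟩ := h
      exact summand_dec hT (interval_dec h2 h3 h4 (Or.inr hε) h5)
    · obtain ⟨rfl, h1, h2, h3, h4⟩ := h
      obtain ⟨p, rfl⟩ : ∃ p, lo = p + 1 := ⟨lo - 1, by omega⟩
      refine summand_inc hT (interval_inc h2 (by omega) h3 ?_ (Or.inr (by simpa using hε)))
      simpa using h4

end CambrianA
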